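/- arXiv:2112.01647 — 3 statements merged into one kernel-verified Lean document; each statement's English description precedes it below -/
import Mathlib

section
/- There is a universal constant δ₀ ∈ (0,1) such that for every ε ∈ (0,1) there is d₀(ε) with the following property: for every integer d ≥ d₀(ε), all sufficiently large n, every integer ℓ with 2 ≤ ℓ ≤ exp(n^{δ₀}), and every transitive abelian subgroup H of Sym(ℓ), there exist a d-regular graph G₀ on n' vertices with n ≤ n' ≤ 2n and an (H,ℓ)-signing s of G₀ such that the lifted graph G = G₀(s) is d-regular on n'·ℓ vertices and satisfies λ(G) ≤ ε·d. -/
open scoped Classical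

noncomputable section



/-- The `(H,ℓ)`-lift of a graph `G` under an edge-signing `s` valued in permutations of
`Fin ℓ`: the vertex `(u, i)` is joined to `(v, s u v • i)` for each edge `{u, v}` of `G`
(the signing is extended to both orientations by `s v u = (s u v)⁻¹`). -/
def liftGraph {V : Type*} {ℓ : ℕ} (G : SimpleGraph V) (s : V → V → Equiv.Perm (Fin ℓ)) :
    SimpleGraph (V × Fin ℓ) :=
  SimpleGraph.fromRel (fun p q => G.Adj p.1 q.1 ∧ q.2 = s p.1 q.1 p.2)

/-- `λ(G) ≤ b` for a `d`-regular graph with adjacency matrix `A`: every eigenvalue other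
than the trivial one (on the constant vectors) has absolute value at most `b`, expressed
via the Rayleigh quotient of `A` on mean-zero vectors. -/
def SndEigLE {V : Type*} [Fintype V] (A : Matrix V V ℝ) (b : ℝ) : Prop :=
  ∀ f : V → ℝ, (∑ v, f v) = 0 →
    |dotProduct f (A.mulVec f)| ≤ b * (∑ v, (f v) ^ 2)


theorem L1 {V : Type*} (a : V → V → ℝ) (ha : ∀ u v, 0 ≤ a u v)
    (hsym : ∀ u v, a u v = a v u) (hd : ∀ u, a u u = 0) (κ r r' : ℝ)
    (hr : 0 ≤ r) (hr' : 0 ≤ r') (hrr : r * r' = 1) (f : V → ℝ) (S : Finset V) :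
    (∀ T ⊆ S, ∑ u ∈ T, ∑ v ∈ T, a u v ≤ κ * T.card) →
    ∑ u ∈ S, ∑ v ∈ S, a u v * (f u * f v) ≤
      κ * r * ∑ u ∈ S, f u ^ 2 + r' * ∑ u ∈ S, (∑ v ∈ S, a u v) * f u ^ 2 := by
  induction S using Finset.strongInduction with
  | H S ih =>
    intro h
    rcases S.eq_empty_or_nonempty with rfl | hne
    · simp
    obtain ⟨v, hv, hvκ⟩ : ∃ v ∈ S, ∑ u ∈ S, a v u ≤ κ := by
      apply Finset.exists_le_of_sum_le hne
      have := h S subset_rfl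
      simpa [mul_comm] using this
    have ih' := ih (S.erase v) (Finset.erase_ssubset hv)
      (fun T hT => h T (hT.trans (Finset.erase_subset _ _)))
    set S' := S.erase v with hS'
    have hS : S = insert v S' := (Finset.insert_erase hv).symm
    have hvn : v ∉ S' := Finset.notMem_erase v S
    rw [hS] at hvκ ⊢
    simp only [Finset.sum_insert hvn, hd, zero_mul, zero_add, Finset.sum_add_distrib,
      add_mul] at hvκ ⊢
    have e1 : ∑ x ∈ S', a x v * (f x * f v) = ∑ x ∈ S', a v x * (f v * f x) :=
      Finset.sum_congr rfl fun x _ => by rw [hsym x v]; ring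
    have e2 : ∑ x ∈ S', a x v * f x ^ 2 = ∑ x ∈ S', a v x * f x ^ 2 :=
      Finset.sum_congr rfl fun x _ => by rw [hsym x v]
    have key : 2 * ∑ x ∈ S', a v x * (f v * f x) ≤
        r * ((∑ x ∈ S', a v x) * f v ^ 2) + r' * ∑ x ∈ S', a v x * f x ^ 2 := by
      rw [Finset.sum_mul, Finset.mul_sum, Finset.mul_sum, Finset.mul_sum,
        ← Finset.sum_add_distrib]
      apply Finset.sum_le_sum
      intro x _
      have : 2 * (f v * f x) ≤ r * f v ^ 2 + r' * f x ^ 2 := by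
        have h1 : 0 ≤ r * (f v - r' * f x) ^ 2 := by positivity
        have h2 : r * (f v - r' * f x) ^ 2
          = r * f v ^ 2 - 2 * (r * r') * (f v * f x) + (r * r') * (r' * f x ^ 2) := by ring
        rw [h2, hrr] at h1
        linarith
      nlinarith [mul_le_mul_of_nonneg_left this (ha v x)]
    have k2 : r * ((∑ x ∈ S', a v x) * f v ^ 2) ≤ κ * r * f v ^ 2 := by
      have : 0 ≤ r * f v ^ 2 := by positivity
      nlinarith [mul_le_mul_of_nonneg_right hvκ this]
    have k3 : 0 ≤ r' * ((∑ x ∈ S', a v x) * f v ^ 2) := by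
      have := Finset.sum_nonneg (fun x (_ : x ∈ S') => ha v x)
      positivity
    rw [e1, e2]
    nlinarith

theorem L2 {V : Type*} [Fintype V] (a : V → V → ℝ) (ha : ∀ u v, 0 ≤ a u v)
    (hsym : ∀ u v, a u v = a v u) (hd : ∀ u, a u u = 0) (d θ τ : ℝ) (hd0 : 0 < d)
    (hθ : 0 < θ) (hθ1 : θ ≤ 1) (hreg : ∀ u, ∑ v, a u v = d)
    (hsp : ∀ S : Finset V, (S.card : ℝ) ≤ τ * Fintype.card V →
      ∑ u ∈ S, ∑ v ∈ S, a u v ≤ θ ^ 2 * d * S.card)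
    (f : V → ℝ) (hf : ∀ u, 0 ≤ f u) (T : Finset V)
    (hT : (T.card : ℝ) ≤ τ * θ ^ 2 / 2 * Fintype.card V) :
    ∑ u ∈ T, ∑ v, a u v * (f u * f v) ≤ 3 * θ * d * ∑ u, f u ^ 2 := by
  set T' : Finset V := Finset.univ.filter (fun v => θ ^ 2 * d < ∑ u ∈ T, a u v) with hT'
  have hT'c : (T'.card : ℝ) * θ ^ 2 ≤ T.card := by
    have h1 : (T'.card : ℝ) * (θ ^ 2 * d) ≤ ∑ v ∈ T', ∑ u ∈ T, a u v := by
      have := Finset.card_nsmul_le_sum T' (fun v => ∑ u ∈ T, a u v) (θ ^ 2 * d)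
        (fun v hv => (Finset.mem_filter.1 hv).2.le)
      simpa using this
    have h2 : ∑ v ∈ T', ∑ u ∈ T, a u v ≤ T.card * d := by
      rw [Finset.sum_comm]
      have := Finset.sum_le_card_nsmul T (fun u => ∑ v ∈ T', a u v) d (fun u _ => by
        rw [← hreg u]
        exact Finset.sum_le_sum_of_subset_of_nonneg (Finset.subset_univ _)
          (fun _ _ _ => ha _ _))
      simpa using this
    have h3 : ((T'.card : ℝ) * θ ^ 2) * d ≤ T.card * d := by linarith
    exact le_of_mul_le_mul_right h3 hd0
  set W := T ∪ T' with hW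
  have hθ2 : θ ^ 2 ≤ 1 := pow_le_one₀ hθ.le hθ1
  have hWc : (W.card : ℝ) ≤ τ * Fintype.card V := by
    have h1 : (W.card : ℝ) ≤ T.card + T'.card := by exact_mod_cast Finset.card_union_le _ _
    have hp : 0 < θ ^ 2 := by positivity
    have h0 : (0:ℝ) ≤ T.card := by positivity
    have h2 : θ ^ 2 * W.card ≤ θ ^ 2 * (τ * Fintype.card V) := by nlinarith
    exact le_of_mul_le_mul_left h2 hp
  have hWs := L1 a ha hsym hd (θ ^ 2 * d) θ⁻¹ θ (by positivity) hθ.le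
    (inv_mul_cancel₀ hθ.ne') f W (fun S hS => hsp S (le_trans (by
      exact_mod_cast Finset.card_le_card hS) hWc))
  have b1 : ∑ u ∈ W, (∑ v ∈ W, a u v) * f u ^ 2 ≤ d * ∑ u ∈ W, f u ^ 2 := by
    rw [Finset.mul_sum]
    apply Finset.sum_le_sum
    intro u _
    apply mul_le_mul_of_nonneg_right _ (sq_nonneg _)
    rw [← hreg u]
    exact Finset.sum_le_sum_of_subset_of_nonneg (Finset.subset_univ _)
          (fun _ _ _ => ha _ _)
  have b2 : ∑ u ∈ W, f u ^ 2 ≤ ∑ u, f u ^ 2 :=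
    Finset.sum_le_sum_of_subset_of_nonneg (Finset.subset_univ _) (fun _ _ _ => sq_nonneg _)
  have b3 : ∑ u ∈ W, ∑ v ∈ W, a u v * (f u * f v) ≤ 2 * θ * d * ∑ u, f u ^ 2 := by
    have e : θ ^ 2 * d * θ⁻¹ = θ * d := by field_simp
    rw [e] at hWs
    have : 0 ≤ θ * d := by positivity
    nlinarith [mul_le_mul_of_nonneg_left b1 hθ.le, mul_le_mul_of_nonneg_left b2 this]
  have nn : ∀ u v, 0 ≤ a u v * (f u * f v) := fun u v =>
    mul_nonneg (ha _ _) (mul_nonneg (hf _) (hf _))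
  have split : ∑ u ∈ T, ∑ v, a u v * (f u * f v) =
      ∑ u ∈ T, ∑ v ∈ W, a u v * (f u * f v) + ∑ u ∈ T, ∑ v ∈ Wᶜ, a u v * (f u * f v) := by
    rw [← Finset.sum_add_distrib]
    exact Finset.sum_congr rfl fun u _ => (Finset.sum_add_sum_compl W _).symm
  have c1 : ∑ u ∈ T, ∑ v ∈ W, a u v * (f u * f v) ≤
      ∑ u ∈ W, ∑ v ∈ W, a u v * (f u * f v) :=
    Finset.sum_le_sum_of_subset_of_nonneg Finset.subset_union_left
      (fun u _ _ => Finset.sum_nonneg fun v _ => nn u v)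
  have c2 : ∑ u ∈ T, ∑ v ∈ Wᶜ, a u v * (f u * f v) ≤
      ∑ u ∈ T, ∑ v ∈ Wᶜ, (θ / 2 * (a u v * f u ^ 2) + θ⁻¹ / 2 * (a u v * f v ^ 2)) := by
    apply Finset.sum_le_sum; intro u _
    apply Finset.sum_le_sum; intro v _
    have h1 : 0 ≤ θ⁻¹ * (θ * f u - f v) ^ 2 := by positivity
    have h2 : θ⁻¹ * (θ * f u - f v) ^ 2 = θ * f u ^ 2 - 2 * (f u * f v) + θ⁻¹ * f v ^ 2 := by
      field_simp; ring
    rw [h2] at h1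
    nlinarith [mul_nonneg (ha u v) h1]
  have c3 : ∑ u ∈ T, ∑ v ∈ Wᶜ, a u v * f u ^ 2 ≤ d * ∑ u, f u ^ 2 := by
    calc _ ≤ ∑ u ∈ T, d * f u ^ 2 := by
          apply Finset.sum_le_sum; intro u _
          rw [← Finset.sum_mul]
          apply mul_le_mul_of_nonneg_right _ (sq_nonneg _)
          rw [← hreg u]
          exact Finset.sum_le_sum_of_subset_of_nonneg (Finset.subset_univ _)
            (fun _ _ _ => ha _ _)
      _ ≤ ∑ u, d * f u ^ 2 := Finset.sum_le_sum_of_subset_of_nonneg (Finset.subset_univ _)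
            (fun _ _ _ => by positivity)
      _ = _ := by rw [Finset.mul_sum]
  have c4 : ∑ u ∈ T, ∑ v ∈ Wᶜ, a u v * f v ^ 2 ≤ θ ^ 2 * d * ∑ u, f u ^ 2 := by
    rw [Finset.sum_comm]
    calc _ ≤ ∑ v ∈ Wᶜ, θ ^ 2 * d * f v ^ 2 := by
          apply Finset.sum_le_sum; intro v hv
          rw [← Finset.sum_mul]
          apply mul_le_mul_of_nonneg_right _ (sq_nonneg _)
          by_contra hcon
          apply Finset.mem_compl.1 hv
          exact Finset.mem_union_right _ (Finset.mem_filter.2 ⟨Finset.mem_univ _, not_le.1 hcon⟩)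
      _ ≤ ∑ v, θ ^ 2 * d * f v ^ 2 := Finset.sum_le_sum_of_subset_of_nonneg (Finset.subset_univ _)
            (fun _ _ _ => by positivity)
      _ = _ := by rw [Finset.mul_sum]
  simp only [Finset.sum_add_distrib, ← Finset.mul_sum] at c2
  have e : θ⁻¹ / 2 * (θ ^ 2 * d * ∑ u, f u ^ 2) = θ / 2 * (d * ∑ u, f u ^ 2) := by
    field_simp
  have c5 := mul_le_mul_of_nonneg_left c4 (show 0 ≤ θ⁻¹ / 2 by positivity)
  have c6 := mul_le_mul_of_nonneg_left c3 (show 0 ≤ θ / 2 by positivity)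
  rw [e] at c5
  rw [split]
  nlinarith

/-- truncation -/
theorem L3 {V : Type*} [Fintype V] {E : Type*} [NormedAddCommGroup E]
    (a : V → V → ℝ) (ha : ∀ u v, 0 ≤ a u v)
    (hsym : ∀ u v, a u v = a v u) (hd : ∀ u, a u u = 0) (d θ τ : ℝ) (hd0 : 0 < d)
    (hθ : 0 < θ) (hθ1 : θ ≤ 1) (hreg : ∀ u, ∑ v, a u v = d)
    (hsp : ∀ S : Finset V, (S.card : ℝ) ≤ τ * Fintype.card V →
      ∑ u ∈ S, ∑ v ∈ S, a u v ≤ θ ^ 2 * d * S.card)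
    (f : V → ℝ) (hf : ∀ u, 0 ≤ f u) (T : Finset V)
    (hT : (T.card : ℝ) ≤ τ * θ ^ 2 / 2 * Fintype.card V)
    (w : V → V → E) (hw : ∀ u v, ‖w u v‖ ≤ a u v * (f u * f v)) :
    ‖∑ u, ∑ v, w u v‖ ≤ ‖∑ u ∈ Tᶜ, ∑ v ∈ Tᶜ, w u v‖ + 6 * θ * d * ∑ u, f u ^ 2 := by
  have key := L2 a ha hsym hd d θ τ hd0 hθ hθ1 hreg hsp f hf T hT
  have e : ∑ u, ∑ v, w u v = ∑ u ∈ Tᶜ, ∑ v ∈ Tᶜ, w u v +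
      (∑ u ∈ T, ∑ v, w u v + ∑ u ∈ Tᶜ, ∑ v ∈ T, w u v) := by
    rw [← Finset.sum_add_sum_compl T (fun u => ∑ v, w u v)]
    have : ∑ u ∈ Tᶜ, ∑ v, w u v = ∑ u ∈ Tᶜ, ∑ v ∈ T, w u v + ∑ u ∈ Tᶜ, ∑ v ∈ Tᶜ, w u v := by
      rw [← Finset.sum_add_distrib]
      exact Finset.sum_congr rfl fun u _ => (Finset.sum_add_sum_compl T _).symm
    rw [this]; abel
  have nn : ∀ u v, 0 ≤ a u v * (f u * f v) := fun u v =>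
    mul_nonneg (ha _ _) (mul_nonneg (hf _) (hf _))
  have k1 : ‖∑ u ∈ T, ∑ v, w u v‖ ≤ ∑ u ∈ T, ∑ v, a u v * (f u * f v) :=
    norm_sum_le_of_le _ fun u _ => norm_sum_le_of_le _ fun v _ => hw u v
  have k2 : ‖∑ u ∈ Tᶜ, ∑ v ∈ T, w u v‖ ≤ ∑ u ∈ T, ∑ v, a u v * (f u * f v) := by
    calc _ ≤ ∑ u ∈ Tᶜ, ∑ v ∈ T, a u v * (f u * f v) :=
          norm_sum_le_of_le _ fun u _ => norm_sum_le_of_le _ fun v _ => hw u v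
      _ ≤ ∑ u, ∑ v ∈ T, a u v * (f u * f v) :=
          Finset.sum_le_sum_of_subset_of_nonneg (Finset.subset_univ _)
            (fun u _ _ => Finset.sum_nonneg fun v _ => nn u v)
      _ = _ := by
          rw [Finset.sum_comm]
          exact Finset.sum_congr rfl fun u _ => Finset.sum_congr rfl fun v _ => by
            rw [hsym u v]; ring
  rw [e]
  refine (norm_add_le _ _).trans ?_
  have := norm_add_le (∑ u ∈ T, ∑ v, w u v) (∑ u ∈ Tᶜ, ∑ v ∈ T, w u v)
  linarith

def sg (b : Bool) : ℝ := if b then 1 else -1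

theorem sg_le (b : Bool) : |sg b| ≤ 1 := by cases b <;> simp [sg]

theorem exists_sg {V : Type*} (g : V → ℝ) : ∃ x : V → Bool, ∀ v, sg (x v) * g v = |g v| := by
  refine ⟨fun v => decide (0 ≤ g v), fun v => ?_⟩
  by_cases h : 0 ≤ g v
  · simp [sg, h, abs_of_nonneg h]
  · simp [sg, h, abs_of_neg (not_le.1 h)]

theorem convex_ext {V : Type*} [Fintype V] (M : V → V → ℝ) (C : ℝ)
    (h : ∀ x y : V → Bool, ∑ u, ∑ v, M u v * (sg (x u) * sg (y v)) ≤ C)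
    (x y : V → ℝ) (hx : ∀ v, |x v| ≤ 1) (hy : ∀ v, |y v| ≤ 1) :
    |∑ u, ∑ v, M u v * (x u * y v)| ≤ C := by
  have h1 : ∀ z : V → Bool, ∑ u, ∑ v, M u v * (x u * sg (z v)) ≤ C := by
    intro z
    obtain ⟨w, hw⟩ := exists_sg (fun u => ∑ v, M u v * sg (z v))
    refine le_trans ?_ (h w z)
    apply Finset.sum_le_sum
    intro u _
    have e1 : ∑ v, M u v * (x u * sg (z v)) = x u * ∑ v, M u v * sg (z v) := by
      rw [Finset.mul_sum]; exact Finset.sum_congr rfl fun _ _ => by ring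
    have e2 : ∑ v, M u v * (sg (w u) * sg (z v)) = sg (w u) * ∑ v, M u v * sg (z v) := by
      rw [Finset.mul_sum]; exact Finset.sum_congr rfl fun _ _ => by ring
    rw [e1, e2, hw u]
    refine (le_abs_self _).trans ?_
    rw [abs_mul]
    exact mul_le_of_le_one_left (abs_nonneg _) (hx u)
  have h2 : ∀ y : V → ℝ, (∀ v, |y v| ≤ 1) → ∑ u, ∑ v, M u v * (x u * y v) ≤ C := by
    intro y hy
    obtain ⟨w, hw⟩ := exists_sg (fun v => ∑ u, M u v * x u)
    refine le_trans ?_ (h1 w)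
    rw [Finset.sum_comm, Finset.sum_comm (f := fun u v => M u v * (x u * sg (w v)))]
    apply Finset.sum_le_sum
    intro v _
    have e1 : ∑ u, M u v * (x u * y v) = y v * ∑ u, M u v * x u := by
      rw [Finset.mul_sum]; exact Finset.sum_congr rfl fun _ _ => by ring
    have e2 : ∑ u, M u v * (x u * sg (w v)) = sg (w v) * ∑ u, M u v * x u := by
      rw [Finset.mul_sum]; exact Finset.sum_congr rfl fun _ _ => by ring
    rw [e1, e2, hw v]
    refine (le_abs_self _).trans ?_
    rw [abs_mul]
    exact mul_le_of_le_one_left (abs_nonneg _) (hy v)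
  rw [abs_le]
  refine ⟨?_, h2 y hy⟩
  have := h2 (fun v => - y v) (fun v => by simpa using hy v)
  simp only [mul_neg, Finset.sum_neg_distrib] at this
  linarith

/-- scaled version -/
theorem convex_scaled {V : Type*} [Fintype V] (M : V → V → ℝ) (C R : ℝ) (hR : 0 ≤ R)
    (h : ∀ x y : V → Bool, ∑ u, ∑ v, M u v * (sg (x u) * sg (y v)) ≤ C)
    (x y : V → ℝ) (hx : ∀ v, |x v| ≤ R) (hy : ∀ v, |y v| ≤ R) :
    |∑ u, ∑ v, M u v * (x u * y v)| ≤ C * R ^ 2 := by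
  rcases hR.eq_or_lt with rfl | hR
  · have : ∀ v, x v = 0 := fun v => by simpa using hx v
    simp [this]
  have hh : ∀ z : V → ℝ, (∀ v, |z v| ≤ R) → ∀ v, |z v / R| ≤ 1 := by
    intro z hz v
    rw [abs_div, abs_of_pos hR, div_le_one hR]; exact hz v
  have := convex_ext M C h (fun v => x v / R) (fun v => y v / R) (hh x hx) (hh y hy)
  have e : ∑ u, ∑ v, M u v * (x u * y v) = (∑ u, ∑ v, M u v * (x u / R * (y v / R))) * R ^ 2 := by
    rw [Finset.sum_mul]
    refine Finset.sum_congr rfl fun u _ => ?_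
    rw [Finset.sum_mul]
    refine Finset.sum_congr rfl fun v _ => ?_
    field_simp
  rw [e, abs_mul, abs_of_nonneg (sq_nonneg R)]
  exact mul_le_mul_of_nonneg_right this (sq_nonneg _)

/-- few large coordinates -/
theorem big_card {V : Type*} [Fintype V] (f : V → ℝ) (R c : ℝ) (hc : 0 ≤ c) (hR : 0 < R)
    (h : ∑ u, f u ^ 2 ≤ c * R ^ 2) :
    (((Finset.univ.filter (fun u => R < |f u|)).card : ℝ)) ≤ c := by
  have h1 := Finset.card_nsmul_le_sum (Finset.univ.filter (fun u => R < |f u|))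
    (fun u => f u ^ 2) (R ^ 2) (fun u hu => by
      rw [← sq_abs (f u)]
      exact pow_le_pow_left₀ hR.le (Finset.mem_filter.1 hu).2.le 2)
  have h2 : ∑ u ∈ Finset.univ.filter (fun u => R < |f u|), f u ^ 2 ≤ ∑ u, f u ^ 2 :=
    Finset.sum_le_sum_of_subset_of_nonneg (Finset.subset_univ _) (fun _ _ _ => sq_nonneg _)
  rw [nsmul_eq_mul] at h1
  exact le_of_mul_le_mul_right (h1.trans (h2.trans h)) (by positivity)


theorem mgf0 {α : Type*} [Fintype α] (g : α → ℝ) (C t : ℝ) (hC : 0 < C)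
    (h0 : ∑ a, g a = 0) (hg : ∀ a, |g a| ≤ C) :
    ∑ a, Real.exp (t * g a) ≤ Fintype.card α * Real.exp (t ^ 2 * C ^ 2 / 2) := by
  have key : ∀ a, Real.exp (t * g a) ≤ Real.cosh (t * C) + g a * (Real.sinh (t * C) / C) := by
    intro a
    have hb := abs_le.1 (hg a)
    have p1 : -1 ≤ g a / C := by rw [le_div_iff₀ hC]; linarith
    have p2 : g a / C ≤ 1 := by rw [div_le_iff₀ hC]; linarith
    have h := (convexOn_exp.2 : _) (Set.mem_univ (t * C)) (Set.mem_univ (-(t * C)))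
      (show (0:ℝ) ≤ (1 + g a / C) / 2 by linarith)
      (show (0:ℝ) ≤ (1 - g a / C) / 2 by linarith) (by ring)
    simp only [smul_eq_mul] at h
    have e : (1 + g a / C) / 2 * (t * C) + (1 - g a / C) / 2 * -(t * C) = t * g a := by
      field_simp; ring
    rw [e] at h
    refine h.trans (le_of_eq ?_)
    rw [Real.cosh_eq, Real.sinh_eq]
    field_simp; ring
  calc _ ≤ ∑ a, (Real.cosh (t * C) + g a * (Real.sinh (t * C) / C)) :=
        Finset.sum_le_sum fun a _ => key a
    _ = Fintype.card α * Real.cosh (t * C) := by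
        rw [Finset.sum_add_distrib, ← Finset.sum_mul, h0]; simp
    _ ≤ _ := by
        apply mul_le_mul_of_nonneg_left _ (by positivity)
        have := Real.cosh_le_exp_half_sq (t * C)
        rwa [mul_pow] at this

theorem mgf_perm (t : ℝ) (m : ℕ) : ∀ (x y : Fin m → ℝ), (∀ i, |x i| ≤ 1) → (∀ i, |y i| ≤ 1) →
    ∑ π : Equiv.Perm (Fin m), Real.exp (t * ∑ i, x i * y (π i)) ≤
      m.factorial * Real.exp (t * ((∑ i, x i) * (∑ i, y i) / m) + 8 * t ^ 2 * m) := by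
  induction m with
  | zero => intro x y _ _; simp
  | succ m ih =>
    intro x y hx hy
    set X' := ∑ i : Fin m, x i.succ with hX'
    set Sy := ∑ i, y i with hSy
    have hXm : |X' / m| ≤ 1 := by
      rcases Nat.eq_zero_or_pos m with rfl | hm
      · simp
      have hm' : (0:ℝ) < m := by exact_mod_cast hm
      rw [abs_div, abs_of_pos hm', div_le_one hm']
      calc |X'| ≤ ∑ i : Fin m, |x i.succ| := Finset.abs_sum_le_sum_abs _ _
        _ ≤ ∑ i : Fin m, 1 := Finset.sum_le_sum fun i _ => hx _
        _ = m := by simp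
    have hybar : |Sy / (m + 1)| ≤ 1 := by
      have hm' : (0:ℝ) < m + 1 := by positivity
      rw [abs_div, abs_of_pos hm', div_le_one hm']
      calc |Sy| ≤ ∑ i : Fin (m+1), |y i| := Finset.abs_sum_le_sum_abs _ _
        _ ≤ ∑ i : Fin (m+1), 1 := Finset.sum_le_sum fun i _ => hy _
        _ = m + 1 := by simp
    set z := x 0 - X' / m with hz
    have hzb : |z| ≤ 2 := by
      have := abs_sub (x 0) (X' / m)
      have := hx 0
      linarith [abs_sub (x 0) (X' / m)]
    rw [← Equiv.sum_comp (Equiv.Perm.decomposeFin.symm), Fintype.sum_prod_type]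
    have step : ∀ p : Fin (m+1), ∑ e : Equiv.Perm (Fin m),
        Real.exp (t * ∑ i, x i * y (Equiv.Perm.decomposeFin.symm (p, e) i)) ≤
        (m.factorial * Real.exp (t * (X' * Sy / m + Sy / (m+1) * z) + 8 * t ^ 2 * m)) *
          Real.exp (t * ((y p - Sy / (m + 1)) * z)) := by
      intro p
      have hY : ∑ i : Fin m, y (Equiv.swap 0 p i.succ) = Sy - y p := by
        have h1 : Sy = ∑ i, y (Equiv.swap 0 p i) := (Equiv.sum_comp _ _).symm
        rw [h1, Fin.sum_univ_succ]; simp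
      have := ih (fun i => x i.succ) (fun i => y (Equiv.swap 0 p i.succ)) (fun _ => hx _)
        (fun _ => hy _)
      rw [hY] at this
      have e1 : ∀ e : Equiv.Perm (Fin m),
          Real.exp (t * ∑ i, x i * y (Equiv.Perm.decomposeFin.symm (p, e) i)) =
          Real.exp (t * (x 0 * y p)) *
          Real.exp (t * ∑ i : Fin m, x i.succ * y (Equiv.swap 0 p (e i).succ)) := by
        intro e
        rw [← Real.exp_add, Fin.sum_univ_succ]
        simp [mul_add]
      simp only [e1, ← Finset.mul_sum]
      refine (mul_le_mul_of_nonneg_left this (Real.exp_pos _).le).trans (le_of_eq ?_)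
      rw [mul_left_comm, mul_assoc (m.factorial : ℝ), ← Real.exp_add, ← Real.exp_add]
      congr 2
      simp only [← hX', hz]
      ring
    refine (Finset.sum_le_sum fun p _ => step p).trans ?_
    rw [← Finset.mul_sum]
    have hm := mgf0 (fun p : Fin (m+1) => (y p - Sy / (m + 1)) * z) 4 t (by norm_num) (by
        rw [← Finset.sum_mul, Finset.sum_sub_distrib]
        simp only [Finset.sum_const, Finset.card_univ, Fintype.card_fin, nsmul_eq_mul, ← hSy]
        push_cast
        field_simp
        ring) (by
        intro p
        rw [abs_mul]
        have h1 : |y p - Sy / (m+1)| ≤ 2 := by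
          have := hy p
          linarith [abs_sub (y p) (Sy / (m+1))]
        calc _ ≤ (2:ℝ) * 2 := mul_le_mul h1 hzb (abs_nonneg _) (by norm_num)
          _ = 4 := by norm_num)
    refine (mul_le_mul_of_nonneg_left hm (by positivity)).trans (le_of_eq ?_)
    rw [Fintype.card_fin, Nat.factorial_succ]
    have e2 : X' * Sy / m + Sy / (m+1) * z = (∑ i, x i) * Sy / ((m + 1 : ℕ) : ℝ) := by
      rw [Fin.sum_univ_succ, ← hX', hz]
      push_cast
      rcases Nat.eq_zero_or_pos m with rfl | hm
      · simp [hX']; ring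
      have hm' : (m:ℝ) ≠ 0 := by positivity
      field_simp
      ring
    rw [e2]
    push_cast
    rw [show ∀ a b c d : ℝ, (a * b) * (c * d) = (c * a) * (b * d) by intros; ring,
      ← Real.exp_add]
    congr 2
    ring

theorem fact_bound (m j : ℕ) (hj : j ≤ m) :
    ((m - j).factorial : ℝ) * (m:ℝ) ^ j ≤ Real.exp 1 ^ j * m.factorial := by
  have h1 : (m:ℝ) ^ j * j.factorial ≤ j ^ j * m.descFactorial j := by
    have : m ^ j * j.factorial ≤ j ^ j * m.descFactorial j := by
      rw [← Nat.descFactorial_self j, Nat.descFactorial_eq_prod_range,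
        Nat.descFactorial_eq_prod_range]
      have hm : m ^ j = ∏ i ∈ Finset.range j, m := by simp
      have hjj : j ^ j = ∏ i ∈ Finset.range j, j := by simp
      rw [hm, hjj, ← Finset.prod_mul_distrib, ← Finset.prod_mul_distrib]
      apply Finset.prod_le_prod'
      intro i hi
      have := Finset.mem_range.1 hi
      obtain ⟨a, rfl⟩ := Nat.exists_eq_add_of_lt this
      obtain ⟨b, rfl⟩ := Nat.exists_eq_add_of_le hj
      have e1 : i + a + 1 - i = a + 1 := by omega
      have e2 : i + a + 1 + b - i = a + 1 + b := by omega
      rw [e1, e2]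
      nlinarith [Nat.zero_le (i * b)]
    exact_mod_cast this
  have h2 : (j:ℝ) ^ j ≤ Real.exp 1 ^ j * j.factorial := by
    have := Real.pow_div_factorial_le_exp (j:ℝ) (by positivity) j
    rw [div_le_iff₀ (by positivity)] at this
    rwa [← Real.exp_nat_mul, mul_one]
  have h3 : (m:ℝ) ^ j ≤ Real.exp 1 ^ j * m.descFactorial j := by
    have hp : (0:ℝ) < j.factorial := by positivity
    have : (m:ℝ) ^ j * j.factorial ≤ (Real.exp 1 ^ j * m.descFactorial j) * j.factorial := by
      refine h1.trans ((mul_le_mul_of_nonneg_right h2 (by positivity)).trans (le_of_eq ?_))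
      ring
    exact le_of_mul_le_mul_right this hp
  have h4 : ((m - j).factorial : ℝ) * m.descFactorial j = m.factorial := by
    exact_mod_cast Nat.factorial_mul_descFactorial hj
  rw [← h4]
  calc _ ≤ ((m - j).factorial : ℝ) * (Real.exp 1 ^ j * m.descFactorial j) := by gcongr
    _ = _ := by ring

theorem perm_count (m : ℕ) (F : Finset (Fin m × Fin m)) :
    (((Finset.univ.filter (fun π : Equiv.Perm (Fin m) => ∀ p ∈ F, π p.1 = p.2)).card : ℝ))
      * (m:ℝ) ^ F.card ≤ Real.exp 1 ^ F.card * m.factorial := by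
  rcases (Finset.univ.filter (fun π : Equiv.Perm (Fin m) => ∀ p ∈ F, π p.1 = p.2)).eq_empty_or_nonempty
    with h | ⟨π₀, h⟩
  · rw [h]; simp; positivity
  have hπ₀ : ∀ p ∈ F, π₀ p.1 = p.2 := (Finset.mem_filter.1 h).2
  set I := F.image Prod.fst with hI
  have hIc : I.card = F.card := by
    apply Finset.card_image_of_injOn
    intro p hp q hq hpq
    ext1
    · exact hpq
    · rw [← hπ₀ p hp, ← hπ₀ q hq]; exact congrArg π₀ hpq
  have hcard : Fintype.card (Equiv.Perm {i // i ∉ I}) = (m - F.card).factorial := by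
    rw [Fintype.card_perm, ← hIc]
    congr 1
    rw [Fintype.card_subtype_compl]
    simp
  have hle : (Finset.univ.filter (fun π : Equiv.Perm (Fin m) => ∀ p ∈ F, π p.1 = p.2)).card
      ≤ (m - F.card).factorial := by
    rw [← hcard, Fintype.card_congr (Equiv.Perm.subtypeEquivSubtypePerm (fun i => i ∉ I)),
      Fintype.card_subtype]
    apply Finset.card_le_card_of_injOn (fun π => π₀⁻¹ * π)
    · intro π hπ
      have hπ' : ∀ p ∈ F, π p.1 = p.2 := (Finset.mem_filter.1 hπ).2
      simp only [Finset.coe_filter, Finset.mem_univ, true_and, Set.mem_ofPred_eq, not_not]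
      intro i hi
      obtain ⟨p, hp, rfl⟩ := Finset.mem_image.1 hi
      rw [Equiv.Perm.mul_apply, hπ' p hp, ← hπ₀ p hp]; simp
    · intro π _ π' _ hh
      exact mul_left_cancel hh
  have hFm : F.card ≤ m := by
    rw [← hIc]; simpa using Finset.card_le_univ I
  refine le_trans ?_ (fact_bound m F.card hFm)
  gcongr

theorem sum_prod {ι α : Type*} [Fintype ι] [DecidableEq ι] [Fintype α] (g : ι → α → ℝ) (b : ι → ℝ)
    (hg : ∀ i a, 0 ≤ g i a) (hb : ∀ i, ∑ a, g i a ≤ Fintype.card α * b i) :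
    ∑ ω : ι → α, ∏ i, g i (ω i) ≤ Fintype.card (ι → α) * ∏ i, b i := by
  have h := Finset.prod_univ_sum (fun _ : ι => (Finset.univ : Finset α)) g
  rw [Fintype.piFinset_univ] at h
  rw [← h]
  calc _ ≤ ∏ i, ((Fintype.card α : ℝ) * b i) :=
        Finset.prod_le_prod (fun i _ => Finset.sum_nonneg fun a _ => hg i a) (fun i _ => hb i)
    _ = _ := by
        rw [Finset.prod_mul_distrib, Fintype.card_fun]; simp


abbrev BV (d m : ℕ) := Fin (d+1) × Fin m
abbrev BOm (d m : ℕ) := Fin (d+1) × Fin (d+1) → Equiv.Perm (Fin m)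

def hb {d m : ℕ} (ω : BOm d m) (p q : BV d m) : ℝ :=
  if p.1 < q.1 ∧ ω (p.1, q.1) p.2 = q.2 then 1 else 0

def hm {d m : ℕ} (p q : BV d m) : ℝ := if p.1 < q.1 then (m:ℝ)⁻¹ else 0

theorem hb_sum {d m : ℕ} (ω : BOm d m) (x y : BV d m → ℝ) :
    ∑ p, ∑ q, hb ω p q * (x p * y q) = ∑ e : Fin (d+1) × Fin (d+1),
      if e.1 < e.2 then ∑ i, x (e.1, i) * y (e.2, ω e i) else 0 := by
  rw [Fintype.sum_prod_type, Fintype.sum_prod_type]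
  refine Finset.sum_congr rfl fun a _ => ?_
  simp only [Fintype.sum_prod_type]
  rw [Finset.sum_comm]
  refine Finset.sum_congr rfl fun b _ => ?_
  split_ifs with h
  · refine Finset.sum_congr rfl fun i _ => ?_
    simp [hb, h]
  · simp [hb, h]

theorem hm_sum {d m : ℕ} (x y : BV d m → ℝ) :
    ∑ p, ∑ q, hm p q * (x p * y q) = ∑ e : Fin (d+1) × Fin (d+1),
      if e.1 < e.2 then (∑ i, x (e.1, i)) * (∑ i, y (e.2, i)) / m else 0 := by
  rw [Fintype.sum_prod_type, Fintype.sum_prod_type]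
  refine Finset.sum_congr rfl fun a _ => ?_
  simp only [Fintype.sum_prod_type]
  rw [Finset.sum_comm]
  refine Finset.sum_congr rfl fun b _ => ?_
  split_ifs with h
  · simp only [hm, h, if_true]
    rw [div_eq_inv_mul, Finset.sum_mul_sum, Finset.mul_sum]
    simp only [Finset.mul_sum]
  · simp [hm, h]

theorem C1 {d m : ℕ} (t : ℝ) (x y : BV d m → ℝ) (hx : ∀ i, |x i| ≤ 1) (hy : ∀ i, |y i| ≤ 1) :
    ∑ ω : BOm d m, Real.exp (t * ∑ p, ∑ q, (hb ω p q - hm p q) * (x p * y q)) ≤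
      Fintype.card (BOm d m) * Real.exp (8 * t ^ 2 * d * ((d + 1) * m)) := by
  have h := sum_prod (ι := Fin (d+1) × Fin (d+1)) (α := Equiv.Perm (Fin m))
    (fun e π => Real.exp (t * if e.1 < e.2 then ∑ i, x (e.1, i) * y (e.2, π i) -
      (∑ i, x (e.1, i)) * (∑ i, y (e.2, i)) / m else 0))
    (fun e => Real.exp (if e.1 < e.2 then 8 * t ^ 2 * m else 0))
    (fun _ _ => (Real.exp_pos _).le) (by
      intro e
      split_ifs with he
      · have := mgf_perm t m (fun i => x (e.1, i)) (fun i => y (e.2, i)) (fun _ => hx _)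
          (fun _ => hy _)
        simp only [mul_sub, Real.exp_sub, ← Finset.sum_div]
        rw [div_le_iff₀ (Real.exp_pos _), mul_assoc, ← Real.exp_add, Fintype.card_perm,
          Fintype.card_fin]
        rwa [add_comm (8 * t ^ 2 * (m:ℝ))]
      · simp)
  have e1 : ∀ ω : BOm d m, Real.exp (t * ∑ p, ∑ q, (hb ω p q - hm p q) * (x p * y q)) =
      ∏ e : Fin (d+1) × Fin (d+1), Real.exp (t * if e.1 < e.2 then
        ∑ i, x (e.1, i) * y (e.2, ω e i) -
      (∑ i, x (e.1, i)) * (∑ i, y (e.2, i)) / m else 0) := by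
    intro ω
    rw [← Real.exp_sum, ← Finset.mul_sum]
    congr 2
    simp only [sub_mul, Finset.sum_sub_distrib]
    rw [hb_sum, hm_sum, ← Finset.sum_sub_distrib]
    refine Finset.sum_congr rfl fun e _ => ?_
    split_ifs <;> simp
  simp only [e1]
  refine h.trans ?_
  apply mul_le_mul_of_nonneg_left _ (by positivity)
  rw [← Real.exp_sum]
  apply Real.exp_le_exp.2
  rw [← Finset.sum_filter, Finset.sum_const, nsmul_eq_mul]
  have hc : (((Finset.univ.filter (fun e : Fin (d+1) × Fin (d+1) => e.1 < e.2)).card : ℝ)) ≤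
      d * (d + 1) := by
    have : (Finset.univ.filter (fun e : Fin (d+1) × Fin (d+1) => e.1 < e.2)).card ≤ d * (d+1) := by
      calc _ ≤ (Finset.univ : Finset (Fin (d+1))).offDiag.card := by
            apply Finset.card_le_card
            intro e he
            simp only [Finset.mem_filter, Finset.mem_univ, true_and] at he
            simp [Finset.mem_offDiag, he.ne]
        _ = d * (d+1) := by
            rw [Finset.offDiag_card]; simp; rw [← Nat.sub_one_mul]; simp
    exact_mod_cast this
  calc _ ≤ (d * (d+1) : ℝ) * (8 * t ^ 2 * m) := by gcongr
    _ = _ := by ring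

theorem C2 {d m : ℕ} (hm0 : 0 < m) (F : Finset (BV d m × BV d m)) (hF : ∀ f ∈ F, f.1.1 < f.2.1) :
    ∑ ω : BOm d m, (if ∀ f ∈ F, hb ω f.1 f.2 = 1 then (1:ℝ) else 0) ≤
      Fintype.card (BOm d m) * (Real.exp 1 / m) ^ F.card := by
  set Fe : Fin (d+1) × Fin (d+1) → Finset (Fin m × Fin m) :=
    fun e => Finset.univ.filter (fun ij => ((e.1, ij.1), (e.2, ij.2)) ∈ F) with hFe
  have hcard : ∑ e, (Fe e).card = F.card := by
    have : F.card = ∑ z : (Fin (d+1) × Fin (d+1)) × (Fin m × Fin m),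
        if ((z.1.1, z.2.1), (z.1.2, z.2.2)) ∈ F then 1 else 0 := by
      rw [← Equiv.sum_comp (Equiv.prodProdProdComm (Fin (d+1)) (Fin m) (Fin (d+1)) (Fin m))]
      simp [Equiv.prodProdProdComm]
    rw [Fintype.sum_prod_type] at this
    rw [this]
    refine Finset.sum_congr rfl fun e _ => ?_
    rw [hFe, Finset.card_filter]
  have h := sum_prod (ι := Fin (d+1) × Fin (d+1)) (α := Equiv.Perm (Fin m))
    (fun e π => if ∀ p ∈ Fe e, π p.1 = p.2 then (1:ℝ) else 0)
    (fun e => (Real.exp 1 / m) ^ (Fe e).card)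
    (fun _ _ => by positivity) (by
      intro e
      have := perm_count m (Fe e)
      rw [Finset.sum_boole, Fintype.card_perm, Fintype.card_fin, div_pow, mul_div_assoc',
        le_div_iff₀ (by positivity)]
      linarith)
  rw [Finset.prod_pow_eq_pow_sum, hcard] at h
  refine le_trans (le_of_eq ?_) h
  refine Finset.sum_congr rfl fun ω _ => ?_
  rw [Finset.prod_boole]
  congr 1
  apply propext
  constructor
  · rintro hh ⟨a, b⟩ _ ⟨i, j⟩ hp
    have hp' := (Finset.mem_filter.1 hp).2
    have := hh _ hp'
    simp only [hb] at this
    by_contra hne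
    rw [if_neg (fun h => hne h.2)] at this
    norm_num at this
  · rintro hh ⟨⟨a, i⟩, ⟨b, j⟩⟩ hf
    have := hh (a, b) (Finset.mem_univ _) (i, j) (Finset.mem_filter.2 ⟨Finset.mem_univ _, hf⟩)
    have h2 := hF _ hf
    simp only [hb]
    rw [if_pos ⟨h2, this⟩]


theorem exp1_le3 : Real.exp 1 ≤ 3 := by linarith [Real.exp_one_lt_d9]

theorem choose_le3 (N j : ℕ) (hj : 0 < j) : (N.choose j : ℝ) ≤ (3 * N / j) ^ j := by
  have h1 : (N.choose j : ℝ) ≤ (N:ℝ) ^ j / j.factorial := Nat.choose_le_pow_div j N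
  have h2 : (j:ℝ) ^ j ≤ 3 ^ j * j.factorial := by
    have := Real.pow_div_factorial_le_exp (j:ℝ) (by positivity) j
    rw [div_le_iff₀ (by positivity)] at this
    refine this.trans ?_
    gcongr
    rw [← mul_one (j:ℝ), Real.exp_nat_mul]
    exact pow_le_pow_left₀ (Real.exp_pos _).le exp1_le3 j
  refine h1.trans ?_
  rw [div_pow, mul_pow, div_le_div_iff₀ (by positivity) (by positivity)]
  calc (N:ℝ) ^ j * j ^ j ≤ N ^ j * (3 ^ j * j.factorial) := by gcongr
    _ = _ := by ring

theorem num1 (d m k q c : ℕ) (θ C τ : ℝ) (hθ : 0 < θ) (hθ1 : θ ≤ 1) (hC : C = 36 / θ ^ 2)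
    (hτ : τ = 1 / (4 * C ^ 2)) (hm : 0 < m) (hk : 0 < k)
    (hkn : (k:ℝ) ≤ τ * ((d+1) * m)) (hq : θ ^ 2 * d * k / 2 ≤ q) (hd : 6 ≤ θ ^ 2 * d)
    (hc : c ≤ k ^ 2) :
    ((((d+1) * m).choose k : ℕ) : ℝ) * ((c.choose q : ℝ) * (Real.exp 1 / m) ^ q) ≤ (1/4) ^ k := by
  have hC36 : 36 ≤ C := by
    rw [hC, le_div_iff₀ (by positivity)]
    have : θ ^ 2 ≤ 1 := pow_le_one₀ hθ.le hθ1
    linarith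
  have hCpos : 0 < C := by linarith
  have hmR : (0:ℝ) < m := by exact_mod_cast hm
  have hkR : (1:ℝ) ≤ k := by exact_mod_cast hk
  set n : ℝ := (d+1) * m with hn
  have hnpos : 0 < n := by positivity
  have hd1 : (1:ℝ) ≤ d := by
    have : θ ^ 2 ≤ 1 := pow_le_one₀ hθ.le hθ1
    have h0 : (0:ℝ) ≤ d := by positivity
    nlinarith
  have h3k : 3 * k ≤ q := by
    have : (3 * k : ℝ) ≤ q := by nlinarith
    exact_mod_cast this
  have hqpos : 0 < q := by omega
  have hqR : (0:ℝ) < q := by exact_mod_cast hqpos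
  set r : ℝ := C * k / n with hr
  have hrpos : 0 < r := by positivity
  have hkn' : k / n ≤ τ := by rw [div_le_iff₀ hnpos]; exact hkn
  have hr1 : r ≤ 1 := by
    have : r = C * (k / n) := by rw [hr]; ring
    rw [this]
    calc C * (k / n) ≤ C * τ := by gcongr
      _ = 1 / (4 * C) := by rw [hτ]; field_simp
      _ ≤ 1 := by rw [div_le_one (by positivity)]; linarith
  have s1 : (c.choose q : ℝ) * (Real.exp 1 / m) ^ q ≤ r ^ q := by
    have a1 : (c.choose q : ℝ) ≤ (3 * (k ^ 2 : ℕ) / q) ^ q :=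
      le_trans (by exact_mod_cast Nat.choose_le_choose q hc) (choose_le3 _ _ hqpos)
    calc _ ≤ (3 * ((k ^ 2 : ℕ):ℝ) / q) ^ q * (3 / m) ^ q := by
          gcongr
          exact exp1_le3
      _ = (9 * k ^ 2 / (q * m)) ^ q := by
          rw [← mul_pow]; push_cast; congr 1; field_simp; ring
      _ ≤ r ^ q := by
          apply pow_le_pow_left₀ (by positivity)
          rw [hr, div_le_div_iff₀ (by positivity) hnpos, hn]
          have b1 : 18 * d * k ≤ C * q := by
            have : C * (θ ^ 2 * d * k / 2) ≤ C * q := by gcongr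
            have e : C * (θ ^ 2 * d * k / 2) = 18 * d * k := by
              rw [hC]; field_simp; ring
            linarith
          have b2 : 9 * k * ((d:ℝ)+1) ≤ C * q := by nlinarith
          calc 9 * (k:ℝ) ^ 2 * ((d+1) * m) = (9 * k * ((d:ℝ)+1)) * (k * m) := by ring
            _ ≤ (C * q) * (k * m) := by gcongr
            _ = _ := by ring
  have s2 : r ^ q ≤ r ^ (3 * k) := pow_le_pow_of_le_one hrpos.le hr1 h3k
  have s3 : ((((d+1) * m).choose k : ℕ) : ℝ) ≤ (3 * n / k) ^ k := by
    have := choose_le3 ((d+1) * m) k hk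
    push_cast at this
    exact this
  calc _ ≤ (3 * n / k) ^ k * r ^ (3 * k) := by gcongr; exact s1.trans s2
    _ = (3 * C ^ 3 * (k / n) ^ 2) ^ k := by
        rw [pow_mul, ← mul_pow]; congr 1; rw [hr]; field_simp
    _ ≤ (1/4) ^ k := by
        apply pow_le_pow_left₀ (by positivity)
        calc 3 * C ^ 3 * (k / n) ^ 2 ≤ 3 * C ^ 3 * τ ^ 2 := by gcongr
          _ = 3 / (16 * C) := by rw [hτ]; field_simp; norm_num
          _ ≤ 1 / 4 := by rw [div_le_div_iff₀ (by positivity) (by norm_num)]; linarith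

theorem geo (n : ℕ) : ∑ k ∈ Finset.range (n+1), (if 0 < k then (1/4:ℝ)^k else 0) ≤ 1/3 := by
  have : ∑ k ∈ Finset.range (n+1), (if 0 < k then (1/4:ℝ)^k else 0) = (1 - (1/4)^n)/3 := by
    induction n with
    | zero => simp
    | succ n ih => rw [Finset.sum_range_succ, ih, if_pos (by omega)]; ring
  rw [this]
  have : (0:ℝ) ≤ (1/4)^n := by positivity
  linarith

/-- the set of candidate edges inside `S` -/
def PS {d m : ℕ} (S : Finset (BV d m)) : Finset (BV d m × BV d m) :=
  (S ×ˢ S).filter (fun f => f.1.1 < f.2.1)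

theorem C3 (d m : ℕ) (θ C τ η : ℝ) (hθ : 0 < θ) (hθ1 : θ ≤ 1) (hC : C = 36 / θ ^ 2)
    (hτ : τ = 1 / (4 * C ^ 2)) (hm0 : 0 < m) (hd : 6 ≤ θ ^ 2 * d) (hη : 0 < η)
    (hd2 : 384 ≤ η ^ 2 * d) :
    ∃ ω : BOm d m,
      (∀ x y : BV d m → Bool, ∑ p, ∑ q, (hb ω p q - hm p q) * (sg (x p) * sg (y q)) ≤
        η * d * ((d+1) * m) / 2) ∧
      (∀ S : Finset (BV d m), (S.card : ℝ) ≤ τ * ((d+1) * m) →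
        ∑ p ∈ S, ∑ q ∈ S, hb ω p q ≤ θ ^ 2 * d * S.card / 2) := by
  set n : ℝ := (d+1) * m with hn
  have hnN : ((Fintype.card (BV d m) : ℕ) : ℝ) = n := by simp [hn]
  have hn1 : 1 ≤ n := by
    have : (1:ℝ) ≤ m := by exact_mod_cast hm0
    have h0 : (0:ℝ) ≤ d := by positivity
    rw [hn]; nlinarith
  set t : ℝ := η / 32 with ht
  set qf : ℕ → ℕ := fun k => ⌈θ ^ 2 * d * k / 2⌉₊ with hqf
  set Φ1 : BOm d m → ℝ := fun ω => ∑ x : BV d m → Bool, ∑ y : BV d m → Bool,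
    Real.exp (t * ∑ p, ∑ q, (hb ω p q - hm p q) * (sg (x p) * sg (y q))) *
      Real.exp (- (t * (η * d * n / 2))) with hΦ1
  set Φ2 : BOm d m → ℝ := fun ω => ∑ S : Finset (BV d m),
    if 0 < S.card ∧ (S.card : ℝ) ≤ τ * n then
      ∑ F ∈ (PS S).powersetCard (qf S.card), (if ∀ f ∈ F, hb ω f.1 f.2 = 1 then (1:ℝ) else 0)
    else 0 with hΦ2
  set N : ℝ := ((Fintype.card (BOm d m) : ℕ) : ℝ) with hN
  have hNpos : 0 < N := by rw [hN]; exact_mod_cast Fintype.card_pos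
  have b1 : ∑ ω, Φ1 ω ≤ N * (1/4) := by
    rw [hΦ1, Finset.sum_comm]
    have : ∀ x : BV d m → Bool, ∑ ω : BOm d m, ∑ y : BV d m → Bool,
        Real.exp (t * ∑ p, ∑ q, (hb ω p q - hm p q) * (sg (x p) * sg (y q))) *
          Real.exp (- (t * (η * d * n / 2))) ≤ ∑ y : BV d m → Bool, N * Real.exp (-(3 * n)) := by
      intro x
      rw [Finset.sum_comm]
      apply Finset.sum_le_sum
      intro y _
      rw [← Finset.sum_mul]
      have := C1 t (fun p => sg (x p)) (fun p => sg (y p)) (fun _ => sg_le _) (fun _ => sg_le _)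
      calc _ ≤ (N * Real.exp (8 * t ^ 2 * d * n)) * Real.exp (- (t * (η * d * n / 2))) := by
            gcongr
        _ = N * Real.exp (- (η ^ 2 * d / 128 * n)) := by
            rw [mul_assoc, ← Real.exp_add, ht]; congr 2; ring
        _ ≤ _ := by
            gcongr; linarith
    refine (Finset.sum_le_sum fun x _ => this x).trans ?_
    simp only [Finset.sum_const, Finset.card_univ, nsmul_eq_mul, Fintype.card_fun,
      Fintype.card_bool]
    set nN := Fintype.card (BV d m) with hnn
    have hnn1 : 0 < nN := by
      have : (1:ℝ) ≤ nN := by rw [hnN]; exact hn1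
      exact_mod_cast this
    rw [← hnN]
    have e3 : Real.exp (-(3 * (nN:ℝ))) ≤ (1/16) ^ nN := by
      have : -(3 * (nN:ℝ)) = nN * (-3) := by ring
      rw [this, Real.exp_nat_mul]
      apply pow_le_pow_left₀ (Real.exp_pos _).le
      rw [Real.exp_neg, inv_le_comm₀ (Real.exp_pos _) (by norm_num)]
      have h3 : Real.exp 3 = Real.exp 1 ^ 3 := by rw [← Real.exp_nat_mul]; norm_num
      rw [h3]
      calc ((1/16:ℝ))⁻¹ ≤ 2.7 ^ 3 := by norm_num
        _ ≤ _ := by gcongr; linarith [Real.exp_one_gt_d9]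
    push_cast
    calc (2:ℝ) ^ nN * (2 ^ nN * (N * Real.exp (-(3 * (nN:ℝ))))) ≤
          (2:ℝ) ^ nN * (2 ^ nN * (N * (1/16) ^ nN)) := by gcongr
      _ = N * (1/4) ^ nN := by
          rw [show (1/4:ℝ) = 2 * (2 * (1/16)) by norm_num, mul_pow, mul_pow]; ring
      _ ≤ N * (1/4) := by
          gcongr
          exact pow_le_of_le_one (by norm_num) (by norm_num) hnn1.ne'
  have b2 : ∑ ω, Φ2 ω ≤ N * (1/3) := by
    rw [hΦ2, Finset.sum_comm]
    set g : ℕ → ℝ := fun k => if 0 < k ∧ (k:ℝ) ≤ τ * n then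
      N * (((k ^ 2).choose (qf k) : ℝ) * (Real.exp 1 / m) ^ qf k) else 0 with hg
    have s1 : ∀ S : Finset (BV d m), (∑ ω : BOm d m, if 0 < S.card ∧ (S.card : ℝ) ≤ τ * n then
      ∑ F ∈ (PS S).powersetCard (qf S.card), (if ∀ f ∈ F, hb ω f.1 f.2 = 1 then (1:ℝ) else 0)
        else 0) ≤ g S.card := by
      intro S
      by_cases hS : 0 < S.card ∧ (S.card : ℝ) ≤ τ * n
      · simp only [hS, hg, and_self, if_true]
        rw [Finset.sum_comm]
        calc _ ≤ ∑ F ∈ (PS S).powersetCard (qf S.card), N * (Real.exp 1 / m) ^ qf S.card := by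
              apply Finset.sum_le_sum
              intro F hF
              have hF' := Finset.mem_powersetCard.1 hF
              have := C2 hm0 F (fun f hf => (Finset.mem_filter.1 (hF'.1 hf)).2)
              rw [hF'.2] at this
              exact this
          _ ≤ _ := by
              rw [Finset.sum_const, Finset.card_powersetCard, nsmul_eq_mul]
              have hc : (PS S).card ≤ S.card ^ 2 := by
                refine (Finset.card_filter_le _ _).trans ?_
                rw [Finset.card_product, sq]
              have : ((PS S).card.choose (qf S.card) : ℝ) ≤ (S.card ^ 2).choose (qf S.card) := by
                exact_mod_cast Nat.choose_le_choose _ hc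
              calc _ ≤ ((S.card ^ 2).choose (qf S.card) : ℝ) *
                    (N * (Real.exp 1 / m) ^ qf S.card) := by gcongr
                _ = _ := by ring
      · simp only [hS, hg, if_false, Finset.sum_const_zero, le_refl]
    refine (Finset.sum_le_sum fun S _ => s1 S).trans ?_
    have s2 := Finset.sum_powerset_apply_card g (x := (Finset.univ : Finset (BV d m)))
    rw [Finset.powerset_univ] at s2
    rw [s2, Finset.card_univ]
    calc _ ≤ ∑ k ∈ Finset.range (Fintype.card (BV d m) + 1),
          N * (if 0 < k then (1/4:ℝ)^k else 0) := by
          apply Finset.sum_le_sum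
          intro k _
          rw [nsmul_eq_mul]
          by_cases hk : 0 < k ∧ (k:ℝ) ≤ τ * n
          · simp only [hg, hk, and_self, if_true]
            have := num1 d m k (qf k) (k^2) θ C τ hθ hθ1 hC hτ hm0 hk.1 hk.2 (Nat.le_ceil _) hd le_rfl
            have hcc : Fintype.card (BV d m) = (d+1) * m := by simp
            rw [hcc, mul_left_comm]
            exact mul_le_mul_of_nonneg_left this hNpos.le
          · simp only [hg, hk, if_false, mul_zero]
            split_ifs <;> positivity
      _ ≤ _ := by
          rw [← Finset.mul_sum]
          exact mul_le_mul_of_nonneg_left (geo _) hNpos.le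
  obtain ⟨ω, -, hω⟩ : ∃ ω ∈ (Finset.univ : Finset (BOm d m)), Φ1 ω + Φ2 ω < 1 := by
    apply Finset.exists_lt_of_sum_lt
    rw [Finset.sum_add_distrib, Finset.sum_const, Finset.card_univ, nsmul_eq_mul, mul_one]
    have : ((Fintype.card (BOm d m) : ℕ) : ℝ) = N := rfl
    rw [this]; linarith
  have p1 : 0 ≤ Φ1 ω := Finset.sum_nonneg fun x _ => Finset.sum_nonneg fun y _ => by positivity
  have nn2 : ∀ S : Finset (BV d m), 0 ≤ (if 0 < S.card ∧ (S.card : ℝ) ≤ τ * n then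
      ∑ F ∈ (PS S).powersetCard (qf S.card), (if ∀ f ∈ F, hb ω f.1 f.2 = 1 then (1:ℝ) else 0)
        else 0) := by
    intro S
    split_ifs
    · exact Finset.sum_nonneg fun F _ => by split_ifs <;> norm_num
    · exact le_rfl
  have p2 : 0 ≤ Φ2 ω := Finset.sum_nonneg fun S _ => nn2 S
  refine ⟨ω, ?_, ?_⟩
  · intro x y
    by_contra hcon
    rw [not_le] at hcon
    have h1 : (1:ℝ) ≤ Φ1 ω := by
      calc (1:ℝ) ≤ Real.exp (t * ∑ p, ∑ q, (hb ω p q - hm p q) * (sg (x p) * sg (y q))) *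
            Real.exp (- (t * (η * d * n / 2))) := by
            rw [← Real.exp_add]
            apply Real.one_le_exp
            have : 0 < t := by positivity
            nlinarith
        _ ≤ ∑ y : BV d m → Bool, Real.exp (t * ∑ p, ∑ q, (hb ω p q - hm p q) * (sg (x p) * sg (y q))) *
            Real.exp (- (t * (η * d * n / 2))) :=
            Finset.single_le_sum (f := fun y : BV d m → Bool => Real.exp (t * ∑ p, ∑ q, (hb ω p q - hm p q) * (sg (x p) * sg (y q))) *
            Real.exp (- (t * (η * d * n / 2)))) (fun y _ => by positivity) (Finset.mem_univ y)
        _ ≤ Φ1 ω := Finset.single_le_sum (f := fun x : BV d m → Bool => ∑ y : BV d m → Bool, Real.exp (t * ∑ p, ∑ q, (hb ω p q - hm p q) * (sg (x p) * sg (y q))) *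
            Real.exp (- (t * (η * d * n / 2)))) (fun x _ => Finset.sum_nonneg fun y _ => by positivity) (Finset.mem_univ x)
    linarith
  · intro S hS
    by_contra hcon
    rw [not_le] at hcon
    have hS0 : 0 < S.card := by
      rcases S.eq_empty_or_nonempty with rfl | h
      · simp at hcon
      · exact h.card_pos
    set ES := (PS S).filter (fun f => hb ω f.1 f.2 = 1) with hES
    have hsum : ∑ p ∈ S, ∑ q ∈ S, hb ω p q = ES.card := by
      rw [← Finset.sum_product', hES, PS, Finset.filter_filter, Finset.card_filter]
      push_cast
      refine Finset.sum_congr rfl fun f _ => ?_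
      by_cases h : f.1.1 < f.2.1 ∧ ω (f.1.1, f.2.1) f.1.2 = f.2.2
      · simp [hb, h]
      · simp [hb, h]
    have hq : qf S.card ≤ ES.card := by
      rw [hqf]
      apply Nat.ceil_le.2
      rw [← hsum]; exact hcon.le
    obtain ⟨F, hF, hFc⟩ := Finset.exists_subset_card_eq hq
    have h1 : (1:ℝ) ≤ Φ2 ω := by
      calc (1:ℝ) = (if ∀ f ∈ F, hb ω f.1 f.2 = 1 then (1:ℝ) else 0) := by
            rw [if_pos]; intro f hf; exact (Finset.mem_filter.1 (hF hf)).2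
        _ ≤ ∑ F ∈ (PS S).powersetCard (qf S.card), (if ∀ f ∈ F, hb ω f.1 f.2 = 1 then (1:ℝ) else 0) :=
            Finset.single_le_sum (f := fun F => if ∀ f ∈ F, hb ω f.1 f.2 = 1 then (1:ℝ) else 0)
              (fun F _ => by split_ifs <;> norm_num)
              (Finset.mem_powersetCard.2 ⟨hF.trans (Finset.filter_subset _ _), hFc⟩)
        _ = (if 0 < S.card ∧ (S.card : ℝ) ≤ τ * n then
              ∑ F ∈ (PS S).powersetCard (qf S.card), (if ∀ f ∈ F, hb ω f.1 f.2 = 1 then (1:ℝ) else 0)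
              else 0) := by rw [if_pos ⟨hS0, hS⟩]
        _ ≤ Φ2 ω := Finset.single_le_sum (f := fun S : Finset (BV d m) => if 0 < S.card ∧ (S.card : ℝ) ≤ τ * n then
              ∑ F ∈ (PS S).powersetCard (qf S.card), (if ∀ f ∈ F, hb ω f.1 f.2 = 1 then (1:ℝ) else 0)
              else 0) (fun S _ => nn2 S) (Finset.mem_univ S)
    linarith


def ba {d m : ℕ} (ω : BOm d m) (p q : BV d m) : ℝ := hb ω p q + hb ω q p

theorem ba_symm {d m : ℕ} (ω : BOm d m) (p q : BV d m) : ba ω p q = ba ω q p := add_comm _ _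

theorem ba_01 {d m : ℕ} (ω : BOm d m) (p q : BV d m) : ba ω p q = 0 ∨ ba ω p q = 1 := by
  unfold ba hb
  by_cases h1 : p.1 < q.1
  · have h2 : ¬ q.1 < p.1 := not_lt.2 h1.le
    by_cases h3 : ω (p.1, q.1) p.2 = q.2 <;> simp [h1, h2, h3]
  · by_cases h3 : q.1 < p.1 ∧ ω (q.1, p.1) q.2 = p.2 <;> simp [h1, h3]

theorem ba_nonneg {d m : ℕ} (ω : BOm d m) (p q : BV d m) : 0 ≤ ba ω p q := by
  rcases ba_01 ω p q with h | h <;> rw [h]; norm_num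

theorem ba_diag {d m : ℕ} (ω : BOm d m) (p : BV d m) : ba ω p p = 0 := by
  simp [ba, hb]

theorem ba_row {d m : ℕ} (ω : BOm d m) (p : BV d m) : ∑ q, ba ω p q = d := by
  unfold ba hb
  rw [Fintype.sum_prod_type]
  have h1 : ∀ b : Fin (d+1), ∑ j : Fin m,
      ((if p.1 < b ∧ ω (p.1, b) p.2 = j then (1:ℝ) else 0) +
        (if b < p.1 ∧ ω (b, p.1) j = p.2 then (1:ℝ) else 0)) = if b ≠ p.1 then 1 else 0 := by
    intro b
    rcases lt_trichotomy p.1 b with h | h | h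
    · simp [h, h.not_gt, h.ne']
    · simp [h]
    · have : ∀ j, ω (b, p.1) j = p.2 ↔ j = (ω (b, p.1)).symm p.2 := fun j => by
        rw [Equiv.eq_symm_apply]
      simp [h, h.not_gt, h.ne, this]
  simp only [h1]
  rw [Finset.sum_boole, Finset.filter_ne']
  simp

set_option maxHeartbeats 2000000 in
theorem ba_lam {d m : ℕ} (ω : BOm d m) (ε θ τ c η : ℝ) (hθ : θ = ε / 28)
    (hε : 0 < ε) (hε1 : ε < 1) (hτ0 : 0 < τ) (hτ1 : τ ≤ 1) (hc : c = τ * θ ^ 2 / 2)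
    (hη : η = ε * c / 4) (hm0 : 0 < m) (hd : 6 ≤ θ ^ 2 * d)
    (h1 : ∀ x y : BV d m → Bool, ∑ p, ∑ q, (hb ω p q - hm p q) * (sg (x p) * sg (y q)) ≤
        η * d * ((d+1) * m) / 2)
    (h2 : ∀ S : Finset (BV d m), (S.card : ℝ) ≤ τ * Fintype.card (BV d m) →
        ∑ p ∈ S, ∑ q ∈ S, ba ω p q ≤ θ ^ 2 * d * S.card)
    (f : BV d m → ℝ) (hf : ∑ p, f p = 0) :
    |∑ p, ∑ q, ba ω p q * (f p * f q)| ≤ ε * d * ∑ p, f p ^ 2 := by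
  set Q := ∑ p, f p ^ 2 with hQ
  have hQ0 : 0 ≤ Q := Finset.sum_nonneg fun _ _ => sq_nonneg _
  have hθ0 : 0 < θ := by rw [hθ]; positivity
  have hθ1 : θ ≤ 1 := by rw [hθ]; linarith
  have hd1 : (1:ℝ) ≤ d := by
    have : θ ^ 2 ≤ 1 := pow_le_one₀ hθ0.le hθ1
    have h0 : (0:ℝ) ≤ d := by positivity
    nlinarith
  have hmR : (1:ℝ) ≤ m := by exact_mod_cast hm0
  rcases hQ0.eq_or_lt with hQz | hQpos
  · have : ∀ p, f p = 0 := by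
      intro p
      have := (Finset.sum_eq_zero_iff_of_nonneg (fun p _ => sq_nonneg (f p))).1 hQz.symm p
        (Finset.mem_univ p)
      simpa using this
    simp [this, ← hQz]
  set n : ℝ := (d+1) * m with hn
  have hcard : ((Fintype.card (BV d m) : ℕ) : ℝ) = n := by simp [hn]
  have hn0 : 0 < n := by positivity
  have hc0 : 0 < c := by rw [hc]; positivity
  set R := Real.sqrt (Q / (c * n)) with hR
  have hR2 : R ^ 2 = Q / (c * n) := Real.sq_sqrt (by positivity)
  have hRpos : 0 < R := Real.sqrt_pos.2 (by positivity)
  set T := Finset.univ.filter (fun u => R < |f u|) with hT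
  have hTc : (T.card : ℝ) ≤ c * n := big_card f R (c * n) (by positivity) hRpos (by
    rw [hR2]; apply le_of_eq; field_simp; rfl)
  have main := L3 (E := ℝ) (ba ω) (ba_nonneg ω) (ba_symm ω) (ba_diag ω) d θ τ (by linarith) hθ0 hθ1
    (ba_row ω) h2 (fun p => |f p|) (fun p => abs_nonneg _) T (by rw [hcard, ← hc]; exact hTc)
    (fun p q => ba ω p q * (f p * f q)) (fun p q => by
      rw [Real.norm_eq_abs, abs_mul, abs_mul, abs_of_nonneg (ba_nonneg ω p q)])
  simp only [Real.norm_eq_abs, sq_abs] at main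
  rw [← hQ] at main
  set s : BV d m → ℝ := fun p => if p ∈ T then 0 else f p with hs
  have hsR : ∀ p, |s p| ≤ R := by
    intro p
    by_cases hp : p ∈ T
    · simp [hs, hp, hRpos.le]
    · simp only [hs, hp, if_false]
      by_contra hcon
      exact hp (Finset.mem_filter.2 ⟨Finset.mem_univ _, not_le.1 hcon⟩)
  have e1 : ∑ p ∈ Tᶜ, ∑ q ∈ Tᶜ, ba ω p q * (f p * f q) = ∑ p, ∑ q, ba ω p q * (s p * s q) := by
    rw [← Finset.sum_add_sum_compl T (fun p => ∑ q, ba ω p q * (s p * s q))]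
    have z1 : ∑ p ∈ T, ∑ q, ba ω p q * (s p * s q) = 0 :=
      Finset.sum_eq_zero fun p hp => by simp [hs, hp]
    rw [z1, zero_add]
    refine Finset.sum_congr rfl fun p hp => ?_
    rw [← Finset.sum_add_sum_compl T (fun q => ba ω p q * (s p * s q))]
    have z2 : ∑ q ∈ T, ba ω p q * (s p * s q) = 0 :=
      Finset.sum_eq_zero fun q hq => by simp [hs, hq]
    rw [z2, zero_add]
    refine Finset.sum_congr rfl fun q hq => ?_
    simp [hs, Finset.mem_compl.1 hp, Finset.mem_compl.1 hq]
  have e2 : ∑ p, ∑ q, ba ω p q * (s p * s q) =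
      2 * (∑ p, ∑ q, (hb ω p q - hm p q) * (s p * s q)) + 2 * ∑ p, ∑ q, hm p q * (s p * s q) := by
    have : ∑ p, ∑ q, hb ω q p * (s p * s q) = ∑ p, ∑ q, hb ω p q * (s p * s q) := by
      rw [Finset.sum_comm]
      exact Finset.sum_congr rfl fun p _ => Finset.sum_congr rfl fun q _ => by ring
    simp only [ba, add_mul, sub_mul, Finset.sum_add_distrib, Finset.sum_sub_distrib, this]
    ring
  have k1 : |∑ p, ∑ q, (hb ω p q - hm p q) * (s p * s q)| ≤ (η * d * n / 2) * R ^ 2 :=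
    convex_scaled _ _ R hRpos.le h1 s s hsR hsR
  have k1' : (η * d * n / 2) * R ^ 2 = ε / 8 * d * Q := by
    rw [hR2, hη]; field_simp; norm_num
  have e3 : 2 * ∑ p, ∑ q, hm p q * (s p * s q) =
      ((∑ p, s p) ^ 2 - ∑ a, (∑ i, s (a, i)) ^ 2) / m := by
    have a1 : ∑ p, ∑ q, hm q p * (s p * s q) = ∑ p, ∑ q, hm p q * (s p * s q) := by
      rw [Finset.sum_comm]
      exact Finset.sum_congr rfl fun p _ => Finset.sum_congr rfl fun q _ => by ring
    have a2 : 2 * ∑ p, ∑ q, hm p q * (s p * s q) =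
        ∑ p, ∑ q, (hm p q + hm q p) * (s p * s q) := by
      simp only [add_mul, Finset.sum_add_distrib, a1]; ring
    have a3 : ∀ p q : BV d m, (hm p q + hm q p) * (s p * s q) =
        (s p * s q - (if p.1 = q.1 then s p * s q else 0)) * (m:ℝ)⁻¹ := by
      intro p q
      unfold hm
      rcases lt_trichotomy p.1 q.1 with h | h | h
      · simp [h, h.not_gt, h.ne]; ring
      · simp [h]
      · simp [h, h.not_gt, h.ne']; ring
    rw [a2]
    simp only [a3, ← Finset.sum_mul, Finset.sum_sub_distrib]
    rw [div_eq_mul_inv, sq, Finset.sum_mul_sum]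
    congr 2
    rw [Fintype.sum_prod_type]
    refine Finset.sum_congr rfl fun a _ => ?_
    rw [sq, Finset.sum_mul_sum]
    refine Finset.sum_congr rfl fun i _ => ?_
    rw [Fintype.sum_prod_type, Finset.sum_comm]
    refine Finset.sum_congr rfl fun j _ => ?_
    simp
  have k2 : (∑ p, s p) ^ 2 ≤ c * n * Q := by
    have b1 : ∑ p, s p = - ∑ p ∈ T, f p := by
      have : ∑ p, s p = ∑ p ∈ Tᶜ, f p := by
        rw [← Finset.sum_add_sum_compl T s]
        rw [Finset.sum_eq_zero (s := T) (fun p hp => by simp [hs, hp]), zero_add]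
        exact Finset.sum_congr rfl fun p hp => by simp [hs, Finset.mem_compl.1 hp]
      rw [← Finset.sum_add_sum_compl T f] at hf
      linarith
    rw [b1, neg_sq]
    calc (∑ p ∈ T, f p) ^ 2 ≤ T.card * ∑ p ∈ T, f p ^ 2 := sq_sum_le_card_mul_sum_sq
      _ ≤ (c * n) * Q := by
        apply mul_le_mul hTc _ (Finset.sum_nonneg fun _ _ => sq_nonneg _) (by positivity)
        exact Finset.sum_le_sum_of_subset_of_nonneg (Finset.subset_univ _) (fun _ _ _ => sq_nonneg _)
  have k3 : ∑ a, (∑ i, s (a, i)) ^ 2 ≤ m * Q := by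
    calc ∑ a, (∑ i, s (a, i)) ^ 2 ≤ ∑ a : Fin (d+1), m * ∑ i, s (a, i) ^ 2 := by
          apply Finset.sum_le_sum; intro a _
          simpa using (sq_sum_le_card_mul_sum_sq (s := (Finset.univ : Finset (Fin m)))
            (f := fun i => s (a, i)))
      _ = m * ∑ p, s p ^ 2 := by rw [← Finset.mul_sum, Fintype.sum_prod_type]
      _ ≤ m * Q := by
          gcongr
          apply Finset.sum_le_sum; intro p _
          by_cases hp : p ∈ T
          · simp [hs, hp]; positivity
          · simp [hs, hp]
  have k4 : |((∑ p, s p) ^ 2 - ∑ a, (∑ i, s (a, i)) ^ 2) / m| ≤ c * (d + 1) * Q + Q := by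
    rw [abs_div, abs_of_pos (show (0:ℝ) < m by linarith), div_le_iff₀ (by linarith)]
    have p1 : 0 ≤ (∑ p, s p) ^ 2 := sq_nonneg _
    have p2 : 0 ≤ ∑ a, (∑ i, s (a, i)) ^ 2 := Finset.sum_nonneg fun _ _ => sq_nonneg _
    have : c * n * Q = c * (d+1) * Q * m := by rw [hn]; ring
    rw [abs_le]
    have p3 : 0 ≤ c * (d+1) * Q * m := by positivity
    have p4 : 0 ≤ Q * m := by positivity
    have p5 : (c * (d + 1) * Q + Q) * m = c * (d+1) * Q * m + Q * m := by ring
    have p6 : m * Q = Q * m := mul_comm _ _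
    rw [p5]
    rw [this] at k2
    rw [p6] at k3
    constructor <;> linarith
  have hcθ : c ≤ θ / 2 := by
    rw [hc]
    have : τ * θ ^ 2 ≤ 1 * θ := by
      apply mul_le_mul hτ1 _ (by positivity) (by norm_num)
      nlinarith
    linarith
  have main : |∑ u, ∑ v, ba ω u v * (f u * f v)| ≤ |∑ p, ∑ q, ba ω p q * (s p * s q)| +
      6 * θ * d * Q := by
    rw [← e1]; convert main
  rw [e2, e3] at main
  have k5 := abs_add_le (2 * (∑ p, ∑ q, (hb ω p q - hm p q) * (s p * s q)))
    (((∑ p, s p) ^ 2 - ∑ a, (∑ i, s (a, i)) ^ 2) / m)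
  rw [abs_mul, abs_two] at k5
  rw [k1'] at k1
  have g1 : c * (d + 1) * Q ≤ θ * d * Q := by
    apply mul_le_mul_of_nonneg_right _ hQ0
    nlinarith
  have g2 : Q ≤ ε / 4 * d * Q := by
    have : 1 ≤ ε / 4 * d := by
      rw [hθ] at hd
      have h0 : (0:ℝ) ≤ d := by positivity
      have : ε ^ 2 * d ≤ ε * d := by
        apply mul_le_mul_of_nonneg_right _ h0
        nlinarith
      nlinarith
    nlinarith
  have g3 : 6 * θ * d * Q + θ * d * Q = ε / 4 * d * Q := by rw [hθ]; ring
  have g4 : 0 ≤ ε / 4 * d * Q := by positivity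
  have g5 : ε * d * Q = 4 * (ε / 4 * d * Q) := by ring
  rw [g5]
  have g6 : 2 * (ε / 8 * d * Q) = ε / 4 * d * Q := by ring
  linarith

/-- existence of the base graph -/
theorem base_exists (d m : ℕ) (ε θ C τ c η : ℝ) (hθ : θ = ε / 28)
    (hε : 0 < ε) (hε1 : ε < 1) (hC : C = 36 / θ ^ 2)
    (hτ : τ = 1 / (4 * C ^ 2)) (hc : c = τ * θ ^ 2 / 2)
    (hη : η = ε * c / 4) (hm0 : 0 < m) (hd : 6 ≤ θ ^ 2 * d) (hd2 : 384 ≤ η ^ 2 * d) :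
    ∃ a : Fin ((d+1) * m) → Fin ((d+1) * m) → ℝ,
      (∀ u v, a u v = a v u) ∧ (∀ u v, a u v = 0 ∨ a u v = 1) ∧ (∀ u, a u u = 0) ∧
      (∀ u, ∑ v, a u v = d) ∧
      (∀ S : Finset (Fin ((d+1) * m)), (S.card : ℝ) ≤ τ * Fintype.card (Fin ((d+1) * m)) →
        ∑ p ∈ S, ∑ q ∈ S, a p q ≤ θ ^ 2 * d * S.card) ∧
      (∀ f : Fin ((d+1) * m) → ℝ, ∑ p, f p = 0 →
        |∑ p, ∑ q, a p q * (f p * f q)| ≤ ε * d * ∑ p, f p ^ 2) := by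
  have hθ0 : 0 < θ := by rw [hθ]; positivity
  have hθ1 : θ ≤ 1 := by rw [hθ]; linarith
  have hC36 : 36 ≤ C := by
    rw [hC, le_div_iff₀ (by positivity)]
    have : θ ^ 2 ≤ 1 := pow_le_one₀ hθ0.le hθ1
    linarith
  have hτ0 : 0 < τ := by rw [hτ]; positivity
  have hτ1 : τ ≤ 1 := by
    rw [hτ, div_le_one (by positivity)]; nlinarith
  have hη0 : 0 < η := by rw [hη, hc]; positivity
  obtain ⟨ω, h1, h2⟩ := C3 d m θ C τ η hθ0 hθ1 hC hτ hm0 hd hη0 hd2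
  have h2' : ∀ S : Finset (BV d m), (S.card : ℝ) ≤ τ * Fintype.card (BV d m) →
        ∑ p ∈ S, ∑ q ∈ S, ba ω p q ≤ θ ^ 2 * d * S.card := by
    intro S hS
    have := h2 S (by simpa using hS)
    have e : ∑ p ∈ S, ∑ q ∈ S, hb ω q p = ∑ p ∈ S, ∑ q ∈ S, hb ω p q := Finset.sum_comm
    simp only [ba, Finset.sum_add_distrib, e]
    linarith
  have h3 := ba_lam ω ε θ τ c η hθ hε hε1 hτ0 hτ1 hc hη hm0 hd h1 h2'
  let e : Fin ((d+1) * m) ≃ BV d m := finProdFinEquiv.symm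
  refine ⟨fun u v => ba ω (e u) (e v), fun u v => ba_symm _ _ _, fun u v => ba_01 _ _ _,
    fun u => ba_diag _ _, fun u => ?_, fun S hS => ?_, fun f hf => ?_⟩
  · rw [Equiv.sum_comp e (fun q => ba ω (e u) q)]; exact ba_row _ _
  · have := h2' (S.map e.toEmbedding) (by
      rw [Finset.card_map, ← Fintype.card_congr e]; exact hS)
    rw [Finset.card_map] at this
    simpa using this
  · have := h3 (fun p => f (e.symm p)) (by rw [Equiv.sum_comp e.symm f]; exact hf)
    rw [← Equiv.sum_comp e, Equiv.sum_comp e.symm (fun u => f u ^ 2)] at this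
    simp only [← Equiv.sum_comp e (fun q => ba ω _ q * _), Equiv.symm_apply_apply] at this
    exact this


theorem sg_abs (b : Bool) : |sg b| = 1 := by cases b <;> simp [sg]

/-- extension of a signing to both orientations -/
def sgn {n : ℕ} {A : Type} [AddCommGroup A] (ω : Fin n × Fin n → A) (u v : Fin n) : A :=
  if u < v then ω (u, v) else if v < u then - ω (v, u) else 0

theorem sgn_neg {n : ℕ} {A : Type} [AddCommGroup A] (ω : Fin n × Fin n → A) (u v : Fin n) :
    sgn ω v u = - sgn ω u v := by
  unfold sgn
  rcases lt_trichotomy u v with h | h | h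
  · simp [h, h.not_gt]
  · simp [h]
  · simp [h, h.not_gt]

theorem sgn_form {n : ℕ} {A : Type} [AddCommGroup A] (a : Fin n → Fin n → ℝ)
    (hs : ∀ u v, a u v = a v u) (hd : ∀ u, a u u = 0) (ρ : A → ℝ) (σ : ℝ)
    (hρ : ∀ h, ρ (-h) = σ * ρ h) (X Y : Fin n → ℝ) (ω : Fin n × Fin n → A) :
    ∑ u, ∑ v, a u v * ρ (sgn ω u v) * (X u * Y v) =
      ∑ p : Fin n × Fin n, (if p.1 < p.2 then a p.1 p.2 * (X p.1 * Y p.2 + σ * (X p.2 * Y p.1)) else 0)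
        * ρ (ω p) := by
  have h1 : ∀ u v, a u v * ρ (sgn ω u v) * (X u * Y v) =
      (if u < v then a u v * ρ (ω (u,v)) * (X u * Y v) else 0) +
      (if v < u then a v u * (σ * ρ (ω (v,u))) * (X u * Y v) else 0) := by
    intro u v
    unfold sgn
    rcases lt_trichotomy u v with h | h | h
    · simp [h, h.not_gt]
    · simp [h, hd]
    · simp [h, h.not_gt, hρ, hs u v]
  simp only [h1, Finset.sum_add_distrib]
  rw [Finset.sum_comm (f := fun u v => if v < u then a v u * (σ * ρ (ω (v,u))) * (X u * Y v) else 0)]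
  rw [← Finset.sum_add_distrib, Fintype.sum_prod_type]
  refine Finset.sum_congr rfl fun u _ => ?_
  rw [← Finset.sum_add_distrib]
  refine Finset.sum_congr rfl fun v _ => ?_
  by_cases h : u < v
  · simp [h]; ring
  · simp [h]

theorem F1 {n : ℕ} {A ι : Type} [AddCommGroup A] [Fintype A] [Fintype ι] (a : Fin n → Fin n → ℝ)
    (hs : ∀ u v, a u v = a v u) (h01 : ∀ u v, a u v = 0 ∨ a u v = 1) (hd : ∀ u, a u u = 0)
    (d : ℕ) (hrow : ∀ u, ∑ v, a u v = d)
    (ρ : ι → A → ℝ) (σ : ι → ℝ) (hσ : ∀ i, |σ i| ≤ 1) (hρ : ∀ i h, ρ i (-h) = σ i * ρ i h)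
    (hρ1 : ∀ i h, |ρ i h| ≤ 1) (hρ0 : ∀ i, ∑ h, ρ i h = 0)
    (hn : 0 < n) (hι : (Fintype.card ι : ℝ) ≤ 2 * Real.exp n) (η : ℝ) (hη0 : 0 < η)
    (hη : 40 ≤ η ^ 2 * d) :
    ∃ s : Fin n → Fin n → A, (∀ u v, s v u = - s u v) ∧
      ∀ i, ∀ x y : Fin n → Bool,
        ∑ u, ∑ v, a u v * ρ i (s u v) * (sg (x u) * sg (y v)) ≤ η * d * n := by
  have hn1 : (1:ℝ) ≤ n := by exact_mod_cast hn
  set t := η / 4 with ht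
  let co : ι → (Fin n → Bool) → (Fin n → Bool) → Fin n × Fin n → ℝ := fun i x y p =>
    if p.1 < p.2 then a p.1 p.2 * (sg (x p.1) * sg (y p.2) + σ i * (sg (x p.2) * sg (y p.1))) else 0
  have hco : ∀ i x y p, |co i x y p| ≤ 2 * a p.1 p.2 := by
    intro i x y p
    have ha : 0 ≤ a p.1 p.2 := by rcases h01 p.1 p.2 with h | h <;> simp [h]
    simp only [co]
    split_ifs
    · rw [abs_mul, abs_of_nonneg ha, mul_comm]
      refine mul_le_mul_of_nonneg_right ?_ ha
      refine (abs_add_le _ _).trans ?_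
      simp only [abs_mul, sg_abs]
      have := hσ i
      linarith
    · simpa using ha
  have key : ∀ i x y, ∑ ω : Fin n × Fin n → A, Real.exp (t * ∑ p, co i x y p * ρ i (ω p)) ≤
      Fintype.card (Fin n × Fin n → A) * Real.exp (2 * t ^ 2 * (d * n)) := by
    intro i x y
    have := sum_prod (ι := Fin n × Fin n) (α := A)
      (fun p h => Real.exp (t * (co i x y p * ρ i h))) (fun p => Real.exp (t ^ 2 * (2 * a p.1 p.2) ^ 2 / 2))
      (fun p h => (Real.exp_pos _).le) (fun p => by
        rcases h01 p.1 p.2 with h | h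
        · have h0 := hco i x y p
          rw [h, mul_zero] at h0
          have h0 := abs_nonpos_iff.1 h0
          simp [h0, h]
        apply mgf0 (fun h => co i x y p * ρ i h)
        · simp [h]
        · rw [← Finset.mul_sum, hρ0, mul_zero]
        · intro h
          rw [abs_mul]
          calc _ ≤ |co i x y p| * 1 := mul_le_mul_of_nonneg_left (hρ1 i h) (abs_nonneg _)
            _ ≤ _ := by rw [mul_one]; exact hco i x y p)
    simp only [← Real.exp_sum, ← Finset.mul_sum] at this
    refine this.trans (le_of_eq ?_)
    congr 2
    have e : ∀ p : Fin n × Fin n, t ^ 2 * (2 * a p.1 p.2) ^ 2 / 2 = 2 * t ^ 2 * a p.1 p.2 := by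
      intro p; rcases h01 p.1 p.2 with h | h <;> simp [h]; ring
    simp only [e]
    rw [← Finset.mul_sum, Fintype.sum_prod_type]
    simp only [hrow]
    simp; left; ring
  -- averaging
  let Φ : (Fin n × Fin n → A) → ℝ := fun ω => ∑ i, ∑ x : Fin n → Bool, ∑ y : Fin n → Bool,
    Real.exp (t * ∑ p, co i x y p * ρ i (ω p))
  have tot : ∑ ω, Φ ω ≤ Fintype.card (Fin n × Fin n → A) *
      ((2 * Real.exp n) * 4 ^ n * Real.exp (2 * t ^ 2 * (d * n))) := by
    have : ∑ ω, Φ ω = ∑ i, ∑ x : Fin n → Bool, ∑ y : Fin n → Bool, ∑ ω : Fin n × Fin n → A,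
        Real.exp (t * ∑ p, co i x y p * ρ i (ω p)) := by
      simp only [Φ]
      rw [Finset.sum_comm]
      refine Finset.sum_congr rfl fun i _ => ?_
      rw [Finset.sum_comm]
      refine Finset.sum_congr rfl fun x _ => ?_
      rw [Finset.sum_comm]
    rw [this]
    calc _ ≤ ∑ i : ι, ∑ x : Fin n → Bool, ∑ y : Fin n → Bool,
          (Fintype.card (Fin n × Fin n → A) * Real.exp (2 * t ^ 2 * (d * n)) : ℝ) :=
          Finset.sum_le_sum fun i _ => Finset.sum_le_sum fun x _ => Finset.sum_le_sum fun y _ => key i x y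
      _ = Fintype.card ι * (Fintype.card (Fin n × Fin n → A) * (4 ^ n * Real.exp (2 * t ^ 2 * (d * n)))) := by
          simp only [Finset.sum_const, nsmul_eq_mul, Finset.card_univ]
          rw [show (4:ℝ) = 2 * 2 by norm_num, mul_pow]
          simp only [Fintype.card_fun, Fintype.card_fin, Fintype.card_bool, Fintype.card_prod]
          push_cast; ring
      _ ≤ (2 * Real.exp n) * (Fintype.card (Fin n × Fin n → A) * (4 ^ n * Real.exp (2 * t ^ 2 * (d * n)))) := by
          apply mul_le_mul_of_nonneg_right hι; positivity
      _ = _ := by ring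
  have small : (2 * Real.exp n) * 4 ^ n * Real.exp (2 * t ^ 2 * (d * n)) < Real.exp (t * (η * d * n)) := by
    have e2 : (2:ℝ) < Real.exp 1 := by have := Real.exp_one_gt_d9; linarith
    have e3 : (4:ℝ) ^ n ≤ Real.exp (2 * n) := by
      rw [show (2 * n : ℝ) = n * 2 by ring, Real.exp_nat_mul]
      apply pow_le_pow_left₀ (by norm_num)
      rw [show (2:ℝ) = 1 + 1 by norm_num, Real.exp_add]; nlinarith
    calc _ ≤ Real.exp 1 * Real.exp n * Real.exp (2 * n) * Real.exp (2 * t ^ 2 * (d * n)) := by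
          gcongr
      _ = Real.exp (1 + n + 2 * n + 2 * t ^ 2 * (d * n)) := by simp only [Real.exp_add]
      _ < _ := by
          apply Real.exp_lt_exp.2
          rw [ht]
          have : 40 * (n:ℝ) ≤ η ^ 2 * d * n := mul_le_mul_of_nonneg_right hη (by linarith)
          nlinarith
  have hne : (Finset.univ : Finset (Fin n × Fin n → A)).Nonempty := ⟨fun _ => 0, Finset.mem_univ _⟩
  obtain ⟨ω, -, hω⟩ : ∃ ω ∈ (Finset.univ : Finset (Fin n × Fin n → A)), Φ ω < Real.exp (t * (η * d * n)) := by
    apply Finset.exists_lt_of_sum_lt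
    refine lt_of_le_of_lt tot ?_
    rw [Finset.sum_const, nsmul_eq_mul, Finset.card_univ]
    apply mul_lt_mul_of_pos_left small
    exact_mod_cast Fintype.card_pos_iff.2 ⟨fun _ => 0⟩
  refine ⟨sgn ω, fun u v => sgn_neg ω u v, fun i x y => ?_⟩
  rw [sgn_form a hs hd (ρ i) (σ i) (hρ i) (fun u => sg (x u)) (fun u => sg (y u)) ω]
  have h1 : Real.exp (t * ∑ p, co i x y p * ρ i (ω p)) ≤ Φ ω := by
    have n1 : ∀ i, 0 ≤ ∑ x : Fin n → Bool, ∑ y : Fin n → Bool, Real.exp (t * ∑ p, co i x y p * ρ i (ω p)) :=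
      fun i => Finset.sum_nonneg fun x _ => Finset.sum_nonneg fun y _ => (Real.exp_pos _).le
    refine le_trans ?_ (Finset.single_le_sum (fun i _ => n1 i) (Finset.mem_univ i))
    refine le_trans ?_ (Finset.single_le_sum (fun x _ => Finset.sum_nonneg fun y _ => (Real.exp_pos _).le)
      (Finset.mem_univ x))
    exact Finset.single_le_sum (f := fun y => Real.exp (t * ∑ p, co i x y p * ρ i (ω p)))
      (fun y _ => (Real.exp_pos _).le) (Finset.mem_univ y)
  have h2 := Real.exp_lt_exp.1 (lt_of_le_of_lt h1 hω)
  exact (lt_of_mul_lt_mul_left h2 (by positivity)).le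

open ComplexConjugate

theorem cbound (z : ℂ) : ‖z‖ ≤ |z.re| + |z.im| := Complex.norm_le_abs_re_add_abs_im z

theorem small_part {V : Type} [Fintype V] (a : V → V → ℝ) (z : V → V → ℂ) (B R : ℝ) (hR : 0 ≤ R)
    (h1 : ∀ x y : V → Bool, ∑ u, ∑ v, a u v * (z u v).re * (sg (x u) * sg (y v)) ≤ B)
    (h2 : ∀ x y : V → Bool, ∑ u, ∑ v, a u v * (z u v).im * (sg (x u) * sg (y v)) ≤ B)
    (s : V → ℂ) (hs : ∀ v, ‖s v‖ ≤ R) :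
    ‖∑ u, ∑ v, (a u v : ℂ) * z u v * (s u * conj (s v))‖ ≤ 8 * (B * R ^ 2) := by
  have r : ∀ v, |(s v).re| ≤ R := fun v => (Complex.abs_re_le_norm _).trans (hs v)
  have i : ∀ v, |(s v).im| ≤ R := fun v => (Complex.abs_im_le_norm _).trans (hs v)
  have a1 := fun x y hx hy => abs_le.1 (convex_scaled (fun u v => a u v * (z u v).re) B R hR h1 x y hx hy)
  have a2 := fun x y hx hy => abs_le.1 (convex_scaled (fun u v => a u v * (z u v).im) B R hR h2 x y hx hy)
  have e1 : (∑ u, ∑ v, (a u v : ℂ) * z u v * (s u * conj (s v))).re =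
      ∑ u, ∑ v, a u v * (z u v).re * ((s u).re * (s v).re) +
      ∑ u, ∑ v, a u v * (z u v).re * ((s u).im * (s v).im) -
      ∑ u, ∑ v, a u v * (z u v).im * ((s u).im * (s v).re) +
      ∑ u, ∑ v, a u v * (z u v).im * ((s u).re * (s v).im) := by
    simp only [← Finset.sum_add_distrib, ← Finset.sum_sub_distrib, Complex.re_sum]
    refine Finset.sum_congr rfl fun u _ => Finset.sum_congr rfl fun v _ => ?_
    simp; ring
  have e2 : (∑ u, ∑ v, (a u v : ℂ) * z u v * (s u * conj (s v))).im =
      ∑ u, ∑ v, a u v * (z u v).re * ((s u).im * (s v).re) -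
      ∑ u, ∑ v, a u v * (z u v).re * ((s u).re * (s v).im) +
      ∑ u, ∑ v, a u v * (z u v).im * ((s u).re * (s v).re) +
      ∑ u, ∑ v, a u v * (z u v).im * ((s u).im * (s v).im) := by
    simp only [← Finset.sum_add_distrib, ← Finset.sum_sub_distrib, Complex.im_sum]
    refine Finset.sum_congr rfl fun u _ => Finset.sum_congr rfl fun v _ => ?_
    simp; ring
  have k1 : |(∑ u, ∑ v, (a u v : ℂ) * z u v * (s u * conj (s v))).re| ≤ 4 * (B * R ^ 2) := by
    rw [e1, abs_le]
    have b1 := a1 _ _ r r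
    have b2 := a1 _ _ i i
    have b3 := a2 _ _ i r
    have b4 := a2 _ _ r i
    constructor <;> linarith
  have k2 : |(∑ u, ∑ v, (a u v : ℂ) * z u v * (s u * conj (s v))).im| ≤ 4 * (B * R ^ 2) := by
    rw [e2, abs_le]
    have b1 := a1 _ _ i r
    have b2 := a1 _ _ r i
    have b3 := a2 _ _ r r
    have b4 := a2 _ _ i i
    constructor <;> linarith
  have := cbound (∑ u, ∑ v, (a u v : ℂ) * z u v * (s u * conj (s v)))
  linarith

theorem G2 {n : ℕ} (a : Fin n → Fin n → ℝ) (hs : ∀ u v, a u v = a v u)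
    (h01 : ∀ u v, a u v = 0 ∨ a u v = 1) (hd : ∀ u, a u u = 0)
    (d : ℕ) (hrow : ∀ u, ∑ v, a u v = d) (ε θ τ c η : ℝ) (hθ : θ = ε / 28)
    (hε : 0 < ε) (hε1 : ε < 1) (hτ0 : 0 < τ) (hc : c = τ * θ ^ 2 / 2) (hη : η = ε * c / 16)
    (hsp : ∀ S : Finset (Fin n), (S.card : ℝ) ≤ τ * Fintype.card (Fin n) →
        ∑ p ∈ S, ∑ q ∈ S, a p q ≤ θ ^ 2 * d * S.card) (hd0 : 0 < d) (hn : 0 < n)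
    (z : Fin n → Fin n → ℂ) (hz : ∀ u v, ‖z u v‖ ≤ 1)
    (h1 : ∀ x y : Fin n → Bool, ∑ u, ∑ v, a u v * (z u v).re * (sg (x u) * sg (y v)) ≤ η * d * n)
    (h2 : ∀ x y : Fin n → Bool, ∑ u, ∑ v, a u v * (z u v).im * (sg (x u) * sg (y v)) ≤ η * d * n)
    (g : Fin n → ℂ) :
    ‖∑ u, ∑ v, (a u v : ℂ) * z u v * (g u * conj (g v))‖ ≤ ε * d * ∑ v, ‖g v‖ ^ 2 := by
  set Q := ∑ v, ‖g v‖ ^ 2 with hQ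
  have hQ0 : 0 ≤ Q := Finset.sum_nonneg fun _ _ => sq_nonneg _
  have ha : ∀ u v, 0 ≤ a u v := fun u v => by rcases h01 u v with h | h <;> simp [h]
  have hθ0 : 0 < θ := by rw [hθ]; positivity
  have hθ1 : θ ≤ 1 := by rw [hθ]; linarith
  have hdR : (0:ℝ) < d := by exact_mod_cast hd0
  have hnR : (0:ℝ) < n := by exact_mod_cast hn
  have hc0 : 0 < c := by rw [hc]; positivity
  rcases hQ0.eq_or_lt with hQz | hQpos
  · have : ∀ p, g p = 0 := by
      intro p
      have := (Finset.sum_eq_zero_iff_of_nonneg (fun p _ => sq_nonneg ‖g p‖)).1 hQz.symm p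
        (Finset.mem_univ p)
      simpa using this
    simp [this, ← hQz]
  set R := Real.sqrt (Q / (c * n)) with hR
  have hR2 : R ^ 2 = Q / (c * n) := Real.sq_sqrt (by positivity)
  have hRpos : 0 < R := Real.sqrt_pos.2 (by positivity)
  set T := Finset.univ.filter (fun u => R < |‖g u‖|) with hT
  have hTc : (T.card : ℝ) ≤ c * n := big_card (fun u => ‖g u‖) R (c * n) (by positivity) hRpos (by
    rw [hR2]; apply le_of_eq; field_simp; rfl)
  have main := L3 (E := ℂ) a ha hs hd d θ τ hdR hθ0 hθ1
    hrow hsp (fun p => ‖g p‖) (fun p => norm_nonneg _) T (by rw [← hc]; simpa using hTc)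
    (fun u v => (a u v : ℂ) * z u v * (g u * conj (g v))) (fun u v => by
      rw [norm_mul, norm_mul, norm_mul, RCLike.norm_conj, Complex.norm_real, Real.norm_eq_abs,
        abs_of_nonneg (ha u v)]
      apply mul_le_mul_of_nonneg_right _ (by positivity)
      have := mul_le_mul_of_nonneg_left (hz u v) (ha u v)
      linarith)
  set s : Fin n → ℂ := fun p => if p ∈ T then 0 else g p with hs'
  have hsR : ∀ p, ‖s p‖ ≤ R := by
    intro p
    by_cases hp : p ∈ T
    · simp [hs', hp, hRpos.le]
    · simp only [hs', hp, if_false]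
      by_contra hcon
      exact hp (Finset.mem_filter.2 ⟨Finset.mem_univ _, by rw [abs_norm]; exact not_le.1 hcon⟩)
  have e1 : ∑ p ∈ Tᶜ, ∑ q ∈ Tᶜ, (a p q : ℂ) * z p q * (g p * conj (g q)) =
      ∑ p, ∑ q, (a p q : ℂ) * z p q * (s p * conj (s q)) := by
    rw [← Finset.sum_add_sum_compl T (fun p => ∑ q, (a p q : ℂ) * z p q * (s p * conj (s q)))]
    have z1 : ∑ p ∈ T, ∑ q, (a p q : ℂ) * z p q * (s p * conj (s q)) = 0 :=
      Finset.sum_eq_zero fun p hp => by simp [hs', hp]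
    rw [z1, zero_add]
    refine Finset.sum_congr rfl fun p hp => ?_
    rw [← Finset.sum_add_sum_compl T (fun q => (a p q : ℂ) * z p q * (s p * conj (s q)))]
    have z2 : ∑ q ∈ T, (a p q : ℂ) * z p q * (s p * conj (s q)) = 0 :=
      Finset.sum_eq_zero fun q hq => by simp [hs', hq]
    rw [z2, zero_add]
    refine Finset.sum_congr rfl fun q hq => ?_
    simp [hs', Finset.mem_compl.1 hp, Finset.mem_compl.1 hq]
  have main : ‖∑ u, ∑ v, (a u v : ℂ) * z u v * (g u * conj (g v))‖ ≤
      ‖∑ p, ∑ q, (a p q : ℂ) * z p q * (s p * conj (s q))‖ + 6 * θ * d * Q := by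
    rw [← e1]; convert main; rfl
  have k := small_part a z (η * d * n) R hRpos.le h1 h2 s hsR
  have k' : 8 * (η * d * n * R ^ 2) = ε / 2 * d * Q := by
    rw [hR2, hη]; field_simp; norm_num
  have g3 : 6 * θ * d * Q ≤ ε / 2 * d * Q := by
    rw [hθ]; gcongr ?_ * _ * _; linarith
  have : ε * d * Q = ε / 2 * d * Q + ε / 2 * d * Q := by ring
  linarith

theorem pars {A : Type} [AddCommGroup A] [Fintype A] (F K : A → ℝ) (s : A) :
    ∑ χ : AddChar A ℂ, χ s * ((∑ h, (F h : ℂ) * χ h) * conj (∑ h, (K h : ℂ) * χ h)) =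
      (Fintype.card A : ℂ) * ((∑ h, F h * K (h + s) : ℝ) : ℂ) := by
  have e : ∀ χ : AddChar A ℂ, χ s * ((∑ h, (F h : ℂ) * χ h) * conj (∑ h, (K h : ℂ) * χ h)) =
      ∑ h, ∑ k, (F h * K k : ℂ) * χ (h + s - k) := by
    intro χ
    rw [map_sum, Finset.sum_mul_sum, Finset.mul_sum]
    refine Finset.sum_congr rfl fun h _ => ?_
    rw [Finset.mul_sum]
    refine Finset.sum_congr rfl fun k _ => ?_
    rw [sub_eq_add_neg, AddChar.map_add_eq_mul, AddChar.map_add_eq_mul, AddChar.map_neg_eq_conj]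
    simp; ring
  simp only [e]
  rw [Finset.sum_comm]
  push_cast
  rw [Finset.mul_sum]
  refine Finset.sum_congr rfl fun h _ => ?_
  rw [Finset.sum_comm]
  simp only [← Finset.mul_sum, AddChar.sum_apply_eq_ite, sub_eq_zero]
  simp; ring

theorem G3 {n : ℕ} (a : Fin n → Fin n → ℝ) (hs : ∀ u v, a u v = a v u)
    (h01 : ∀ u v, a u v = 0 ∨ a u v = 1) (hd : ∀ u, a u u = 0)
    (d : ℕ) (hrow : ∀ u, ∑ v, a u v = d) (ε θ τ c η : ℝ) (hθ : θ = ε / 28)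
    (hε : 0 < ε) (hε1 : ε < 1) (hτ0 : 0 < τ) (hc : c = τ * θ ^ 2 / 2) (hη : η = ε * c / 16)
    (hsp : ∀ S : Finset (Fin n), (S.card : ℝ) ≤ τ * Fintype.card (Fin n) →
        ∑ p ∈ S, ∑ q ∈ S, a p q ≤ θ ^ 2 * d * S.card) (hd0 : 0 < d) (hn : 0 < n)
    (hlam : ∀ f : Fin n → ℝ, ∑ p, f p = 0 →
        |∑ p, ∑ q, a p q * (f p * f q)| ≤ ε * d * ∑ p, f p ^ 2)
    (hηd : 40 ≤ η ^ 2 * d) {A : Type} [AddCommGroup A] [Fintype A]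
    (hA : (Fintype.card A : ℝ) ≤ Real.exp n) :
    ∃ s : Fin n → Fin n → A, (∀ u v, s v u = - s u v) ∧
      ∀ f : Fin n → A → ℝ, ∑ u, ∑ h, f u h = 0 →
        |∑ u, ∑ v, a u v * ∑ h, f u h * f v (h + s u v)| ≤ ε * d * ∑ u, ∑ h, f u h ^ 2 := by
  have hθ0 : 0 < θ := by rw [hθ]; positivity
  have hη0 : 0 < η := by rw [hη, hc]; positivity
  let ρ : AddChar A ℂ × Bool → A → ℝ := fun i h =>
    if i.1 = 0 then 0 else if i.2 then (i.1 h).re else (i.1 h).im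
  obtain ⟨s, hs1, hs2⟩ := F1 (A := A) (ι := AddChar A ℂ × Bool) a hs h01 hd d hrow ρ
    (fun i => if i.2 then 1 else -1) (fun i => by split_ifs <;> simp)
    (fun i h => by
      simp only [ρ, AddChar.map_neg_eq_conj]
      split_ifs <;> simp)
    (fun i h => by
      simp only [ρ]
      split_ifs
      · simp
      · exact (Complex.abs_re_le_norm _).trans (AddChar.norm_apply _ _).le
      · exact (Complex.abs_im_le_norm _).trans (AddChar.norm_apply _ _).le)
    (fun i => by
      have h0 := AddChar.sum_eq_ite i.1
      simp only [ρ]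
      by_cases h : i.1 = 0
      · simp [h]
      rw [if_neg h] at h0
      simp only [h, if_false]
      split_ifs
      · rw [← Complex.re_sum, h0]; rfl
      · rw [← Complex.im_sum, h0]; rfl)
    hn (by
      rw [Fintype.card_prod, AddChar.card_eq]
      simp; linarith) η hη0 hηd
  refine ⟨s, hs1, fun f hf => ?_⟩
  let g : AddChar A ℂ → Fin n → ℂ := fun χ u => ∑ h, (f u h : ℂ) * χ h
  have hχ : ∀ χ : AddChar A ℂ, ‖∑ u, ∑ v, (a u v : ℂ) * χ (s u v) * (g χ u * conj (g χ v))‖ ≤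
      ε * d * ∑ v, ‖g χ v‖ ^ 2 := by
    intro χ
    by_cases h : χ = 0
    · subst h
      have e : ∀ u, g 0 u = ((∑ h, f u h : ℝ) : ℂ) := by
        intro u; simp [g]
      have := hlam (fun u => ∑ h, f u h) hf
      simp only [e, Complex.norm_real, Real.norm_eq_abs, sq_abs]
      refine le_trans (le_of_eq ?_) this
      rw [← Real.norm_eq_abs, ← Complex.norm_real]
      congr 1
      simp only [Complex.conj_ofReal]
      push_cast
      simp
    · apply G2 a hs h01 hd d hrow ε θ τ c η hθ hε hε1 hτ0 hc hη hsp hd0 hn (fun u v => χ (s u v))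
        (fun u v => (AddChar.norm_apply _ _).le)
      · intro x y
        have := hs2 (χ, true) x y
        simpa [ρ, h] using this
      · intro x y
        have := hs2 (χ, false) x y
        simpa [ρ, h] using this
  have hcard : (0:ℝ) < Fintype.card A := by exact_mod_cast Fintype.card_pos
  have p1 : (Fintype.card A : ℂ) * ((∑ u, ∑ v, a u v * ∑ h, f u h * f v (h + s u v) : ℝ) : ℂ) =
      ∑ χ : AddChar A ℂ, ∑ u, ∑ v, (a u v : ℂ) * χ (s u v) * (g χ u * conj (g χ v)) := by
    rw [Complex.ofReal_sum, Finset.mul_sum]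
    conv_rhs => rw [Finset.sum_comm]
    refine Finset.sum_congr rfl fun u _ => ?_
    rw [Complex.ofReal_sum, Finset.mul_sum]
    conv_rhs => rw [Finset.sum_comm]
    refine Finset.sum_congr rfl fun v _ => ?_
    simp only [mul_assoc (a u v : ℂ)]
    rw [← Finset.mul_sum, pars, Complex.ofReal_mul]
    ring
  have p2 : ∑ χ : AddChar A ℂ, ∑ v, ‖g χ v‖ ^ 2 = Fintype.card A * ∑ u, ∑ h, f u h ^ 2 := by
    rw [Finset.sum_comm, Finset.mul_sum]
    refine Finset.sum_congr rfl fun v _ => ?_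
    have := pars (f v) (f v) 0
    apply Complex.ofReal_injective
    simp only [AddChar.map_zero_eq_one, one_mul, add_zero, Complex.mul_conj, ← sq] at this
    push_cast at this ⊢
    rw [← this]
    refine Finset.sum_congr rfl fun χ _ => ?_
    rw [Complex.normSq_eq_norm_sq]
    push_cast; rfl
  have p3 : (Fintype.card A : ℝ) * |∑ u, ∑ v, a u v * ∑ h, f u h * f v (h + s u v)| ≤
      Fintype.card A * (ε * d * ∑ u, ∑ h, f u h ^ 2) := by
    have : (Fintype.card A : ℝ) * |∑ u, ∑ v, a u v * ∑ h, f u h * f v (h + s u v)| =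
      ‖(Fintype.card A : ℂ) * ((∑ u, ∑ v, a u v * ∑ h, f u h * f v (h + s u v) : ℝ) : ℂ)‖ := by
      rw [norm_mul, Complex.norm_real, Complex.norm_natCast, Real.norm_eq_abs]
    rw [this, p1]
    calc _ ≤ ∑ χ : AddChar A ℂ, ε * d * ∑ v, ‖g χ v‖ ^ 2 :=
          (norm_sum_le _ _).trans (Finset.sum_le_sum fun χ _ => hχ χ)
      _ = _ := by rw [← Finset.mul_sum, p2]; ring
  exact le_of_mul_le_mul_left p3 hcard

theorem lift_adj {V : Type*} {ℓ : ℕ} (G : SimpleGraph V) (s : V → V → Equiv.Perm (Fin ℓ))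
    (hs : ∀ u v, s v u = (s u v)⁻¹) (p q : V × Fin ℓ) :
    (liftGraph G s).Adj p q ↔ G.Adj p.1 q.1 ∧ q.2 = s p.1 q.1 p.2 := by
  unfold liftGraph
  rw [SimpleGraph.fromRel_adj]
  constructor
  · rintro ⟨-, h | ⟨h1, h2⟩⟩
    · exact h
    · refine ⟨h1.symm, ?_⟩
      rw [h2, hs q.1 p.1]; simp
  · intro h
    refine ⟨?_, Or.inl h⟩
    rintro rfl
    exact h.1.ne rfl

theorem lift_deg {V : Type*} [Fintype V] {ℓ : ℕ} (G : SimpleGraph V) (s : V → V → Equiv.Perm (Fin ℓ))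
    (hs : ∀ u v, s v u = (s u v)⁻¹) (d : ℕ) (hG : G.IsRegularOfDegree d) :
    (liftGraph G s).IsRegularOfDegree d := by
  intro p
  rw [← hG p.1, ← SimpleGraph.card_neighborSet_eq_degree, ← SimpleGraph.card_neighborSet_eq_degree]
  refine Fintype.card_congr ⟨fun q => ⟨q.1.1, ((lift_adj G s hs p q.1).1 q.2).1⟩,
    fun v => ⟨(v.1, s p.1 v.1 p.2), (lift_adj G s hs p _).2 ⟨v.2, rfl⟩⟩, ?_, ?_⟩
  · rintro ⟨q, hq⟩
    have := ((lift_adj G s hs p q).1 hq).2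
    ext
    · rfl
    · simp [this]
  · rintro ⟨v, hv⟩; rfl

theorem lift_form {n ℓ : ℕ} (a : Fin n → Fin n → ℝ) (h01 : ∀ u v, a u v = 0 ∨ a u v = 1)
    (G : SimpleGraph (Fin n)) (hG : ∀ u v, G.Adj u v ↔ a u v = 1)
    (s : Fin n → Fin n → Equiv.Perm (Fin ℓ)) (hs : ∀ u v, s v u = (s u v)⁻¹)
    (f : Fin n × Fin ℓ → ℝ) :
    dotProduct f (((liftGraph G s).adjMatrix ℝ).mulVec f) =
      ∑ u, ∑ v, a u v * ∑ i, f (u, i) * f (v, s u v i) := by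
  simp only [dotProduct, Matrix.mulVec, SimpleGraph.adjMatrix_apply, lift_adj G s hs]
  rw [Fintype.sum_prod_type]
  refine Finset.sum_congr rfl fun u _ => ?_
  simp only [Finset.mul_sum]
  conv_rhs => rw [Finset.sum_comm]
  refine Finset.sum_congr rfl fun i _ => ?_
  rw [Fintype.sum_prod_type]
  refine Finset.sum_congr rfl fun v _ => ?_
  rcases h01 u v with h | h
  · have : ¬ G.Adj u v := by rw [hG, h]; norm_num
    simp [this, h]
  · have : G.Adj u v := by rw [hG, h]
    simp [this, h]

theorem fin_step {n ℓ d : ℕ} (a : Fin n → Fin n → ℝ) (hsy : ∀ u v, a u v = a v u)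
    (h01 : ∀ u v, a u v = 0 ∨ a u v = 1) (hd : ∀ u, a u u = 0) (hrow : ∀ u, ∑ v, a u v = d)
    (b : ℝ) (hℓ : 0 < ℓ) (hle : (ℓ : ℝ) ≤ Real.exp n) (H : Subgroup (Equiv.Perm (Fin ℓ)))
    (htr : ∀ i j : Fin ℓ, ∃ h ∈ H, h i = j) (hab : ∀ a b : H, a * b = b * a)
    (main : ∀ (A : Type) [AddCommGroup A] [Fintype A], (Fintype.card A : ℝ) ≤ Real.exp n →
      ∃ s : Fin n → Fin n → A, (∀ u v, s v u = - s u v) ∧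
      ∀ f : Fin n → A → ℝ, ∑ u, ∑ h, f u h = 0 →
        |∑ u, ∑ v, a u v * ∑ h, f u h * f v (h + s u v)| ≤ b * ∑ u, ∑ h, f u h ^ 2) :
    ∃ G₀ : SimpleGraph (Fin n), G₀.IsRegularOfDegree d ∧
      ∃ s : Fin n → Fin n → H,
        (∀ u v, s v u = (s u v)⁻¹) ∧
        (liftGraph G₀ (fun u v => (s u v : Equiv.Perm (Fin ℓ)))).IsRegularOfDegree d ∧
        SndEigLE ((liftGraph G₀ (fun u v => (s u v : Equiv.Perm (Fin ℓ)))).adjMatrix ℝ) b := by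
  letI : CommGroup H := { (inferInstance : Group H) with mul_comm := hab }
  let i0 : Fin ℓ := ⟨0, hℓ⟩
  have hbij : Function.Bijective (fun h : Additive H => (h.toMul : Equiv.Perm (Fin ℓ)) i0) := by
    constructor
    · intro h k hk
      have hk : (h.toMul : Equiv.Perm (Fin ℓ)) i0 = (k.toMul : Equiv.Perm (Fin ℓ)) i0 := hk
      apply Additive.toMul.injective
      apply Subtype.ext
      ext1 j
      obtain ⟨g, hg, rfl⟩ := htr i0 j
      have c1 : ∀ x : H, (x : Equiv.Perm (Fin ℓ)) (g i0) = g ((x : Equiv.Perm (Fin ℓ)) i0) := by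
        intro x
        have := congrArg (fun y : H => (y : Equiv.Perm (Fin ℓ)) i0) (hab x ⟨g, hg⟩)
        simpa using this
      rw [c1, c1, hk]
    · intro j
      obtain ⟨g, hg, h⟩ := htr i0 j
      exact ⟨Additive.ofMul ⟨g, hg⟩, h⟩
  let e : Additive H ≃ Fin ℓ := Equiv.ofBijective _ hbij
  haveI : Fintype (Additive H) := Fintype.ofEquiv _ e.symm
  obtain ⟨s, hs1, hs2⟩ := main (Additive H) (by
    rw [Fintype.card_congr e, Fintype.card_fin]; exact hle)
  let G : SimpleGraph (Fin n) :=
    { Adj := fun u v => a u v = 1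
      symm := ⟨fun u v h => by rw [hsy]; exact h⟩
      loopless := ⟨fun u h => by rw [hd] at h; norm_num at h⟩ }
  have hG : ∀ u v, G.Adj u v ↔ a u v = 1 := fun u v => Iff.rfl
  have hreg : G.IsRegularOfDegree d := by
    intro u
    have : (G.degree u : ℝ) = d := by
      rw [← hrow u, ← SimpleGraph.card_neighborFinset_eq_degree, SimpleGraph.neighborFinset_eq_filter,
        Finset.card_filter]
      push_cast
      refine Finset.sum_congr rfl fun v _ => ?_
      rcases h01 u v with h | h
      · have : ¬ G.Adj u v := by rw [hG, h]; norm_num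
        simp [this, h]
      · have : G.Adj u v := by rw [hG, h]
        simp [this, h]
    exact_mod_cast this
  have hinv : ∀ u v, (s v u).toMul = ((s u v).toMul)⁻¹ := fun u v => by rw [hs1]; rfl
  have hinv' : ∀ u v, ((s v u).toMul : Equiv.Perm (Fin ℓ)) = ((s u v).toMul : Equiv.Perm (Fin ℓ))⁻¹ :=
    fun u v => by rw [hinv]; rfl
  refine ⟨G, hreg, fun u v => (s u v).toMul, hinv, lift_deg G _ hinv' d hreg, ?_⟩
  intro f hf
  rw [lift_form a h01 G hG _ hinv' f]
  have h2 := hs2 (fun u h => f (u, e h)) (by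
    rw [← hf, Fintype.sum_prod_type]
    exact Finset.sum_congr rfl fun u _ => Equiv.sum_comp e (fun i => f (u, i)))
  have r : ∑ v, f v ^ 2 = ∑ u, ∑ h, f (u, e h) ^ 2 := by
    rw [Fintype.sum_prod_type]
    exact Finset.sum_congr rfl fun u _ => (Equiv.sum_comp e (fun i => f (u, i) ^ 2)).symm
  rw [r]
  convert h2 using 2
  refine Finset.sum_congr rfl fun u _ => Finset.sum_congr rfl fun v _ => ?_
  congr 1
  rw [← Equiv.sum_comp e]
  refine Finset.sum_congr rfl fun h _ => ?_
  congr 2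
  rw [add_comm]
  rfl

/-- Moderately-exponential regime: explicit abelian lifts with `λ(G) ≤ ε·d`. -/
theorem stmt1 :
    ∃ δ₀ : ℝ, 0 < δ₀ ∧ δ₀ < 1 ∧
      ∀ ε : ℝ, 0 < ε → ε < 1 →
        ∃ d₀ : ℕ, ∀ d : ℕ, d₀ ≤ d →
          ∃ N : ℕ, ∀ n : ℕ, N ≤ n →
            ∀ ℓ : ℕ, 2 ≤ ℓ → (ℓ : ℝ) ≤ Real.exp ((n : ℝ) ^ δ₀) →
              ∀ H : Subgroup (Equiv.Perm (Fin ℓ)),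
                (∀ i j : Fin ℓ, ∃ h ∈ H, h i = j) →
                (∀ a b : H, a * b = b * a) →
                ∃ n' : ℕ, n ≤ n' ∧ n' ≤ 2 * n ∧
                  ∃ G₀ : SimpleGraph (Fin n'), G₀.IsRegularOfDegree d ∧
                    ∃ s : Fin n' → Fin n' → H,
                      (∀ u v, s v u = (s u v)⁻¹) ∧
                      (liftGraph G₀ (fun u v => (s u v : Equiv.Perm (Fin ℓ)))).IsRegularOfDegree d ∧
                      SndEigLE
                        ((liftGraph G₀ (fun u v => (s u v : Equiv.Perm (Fin ℓ)))).adjMatrix ℝ)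
                        (ε * d) := by
  refine ⟨1 / 2, by norm_num, by norm_num, fun ε hε hε1 => ?_⟩
  obtain ⟨θ, hθ⟩ : ∃ θ : ℝ, θ = ε / 28 := ⟨_, rfl⟩
  obtain ⟨C, hC⟩ : ∃ C : ℝ, C = 36 / θ ^ 2 := ⟨_, rfl⟩
  obtain ⟨τ, hτ⟩ : ∃ τ : ℝ, τ = 1 / (4 * C ^ 2) := ⟨_, rfl⟩
  obtain ⟨c, hc⟩ : ∃ c : ℝ, c = τ * θ ^ 2 / 2 := ⟨_, rfl⟩
  obtain ⟨η, hη⟩ : ∃ η : ℝ, η = ε * c / 4 := ⟨_, rfl⟩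
  obtain ⟨κ, hκ⟩ : ∃ κ : ℝ, κ = ε * c / 16 := ⟨_, rfl⟩
  have hθ0 : 0 < θ := by rw [hθ]; positivity
  have hC0 : 0 < C := by rw [hC]; positivity
  have hτ0 : 0 < τ := by rw [hτ]; positivity
  have hc0 : 0 < c := by rw [hc]; positivity
  have hη0 : 0 < η := by rw [hη]; positivity
  have hκ0 : 0 < κ := by rw [hκ]; positivity
  obtain ⟨d1, hd1⟩ := exists_nat_ge (6 / θ ^ 2)
  obtain ⟨d2, hd2⟩ := exists_nat_ge (384 / η ^ 2)
  obtain ⟨d3, hd3⟩ := exists_nat_ge (40 / κ ^ 2)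
  refine ⟨d1 + d2 + d3 + 1, fun d hd => ⟨d + 1, fun n hn ℓ hℓ hle H htr hab => ?_⟩⟩
  have hdR : (d1 + d2 + d3 + 1 : ℝ) ≤ d := by exact_mod_cast hd
  have n1 : (0:ℝ) ≤ d1 := Nat.cast_nonneg _
  have n2 : (0:ℝ) ≤ d2 := Nat.cast_nonneg _
  have n3 : (0:ℝ) ≤ d3 := Nat.cast_nonneg _
  have k1 : 6 ≤ θ ^ 2 * d := by
    rw [div_le_iff₀ (by positivity)] at hd1
    have : θ ^ 2 * d1 ≤ θ ^ 2 * d := mul_le_mul_of_nonneg_left (by linarith) (by positivity)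
    linarith
  have k2 : 384 ≤ η ^ 2 * d := by
    rw [div_le_iff₀ (by positivity)] at hd2
    have : η ^ 2 * d2 ≤ η ^ 2 * d := mul_le_mul_of_nonneg_left (by linarith) (by positivity)
    linarith
  have k3 : 40 ≤ κ ^ 2 * d := by
    rw [div_le_iff₀ (by positivity)] at hd3
    have : κ ^ 2 * d3 ≤ κ ^ 2 * d := mul_le_mul_of_nonneg_left (by linarith) (by positivity)
    linarith
  obtain ⟨m, hm⟩ : ∃ m, m = n / (d + 1) + 1 := ⟨_, rfl⟩
  have hdm := Nat.div_add_mod n (d + 1)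
  have hmod := Nat.mod_lt n (show 0 < d + 1 by omega)
  have e1 : (d + 1) * m = (d + 1) * (n / (d + 1)) + (d + 1) := by rw [hm]; ring
  have hn1 : n ≤ (d + 1) * m := by omega
  have hn2 : (d + 1) * m ≤ 2 * n := by omega
  refine ⟨(d + 1) * m, hn1, hn2, ?_⟩
  obtain ⟨a, a1, a2, a3, a4, a5, a6⟩ := base_exists d m ε θ C τ c η hθ hε hε1 hC hτ hc hη
    (by rw [hm]; exact Nat.succ_pos _) k1 k2
  refine fin_step a a1 a2 a3 a4 (ε * d) (by omega) ?_ H htr hab ?_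
  · refine hle.trans (Real.exp_le_exp.2 ?_)
    have g1 : (1:ℝ) ≤ n := by exact_mod_cast (show 1 ≤ n by omega)
    calc (n:ℝ) ^ (1 / 2 : ℝ) ≤ (n:ℝ) ^ (1:ℝ) := Real.rpow_le_rpow_of_exponent_le g1 (by norm_num)
      _ = n := Real.rpow_one _
      _ ≤ _ := by exact_mod_cast hn1
  · intro A _ _ hA
    exact G3 a a1 a2 a3 d a4 ε θ τ c κ hθ hε hε1 hτ0 hc hκ a5 (by omega) (by omega) a6 k3 hA
end
end

section
/- Let H be a finite connected graph that is bicycle-free at radius r, where r ≥ 10·ln(|V(H)|). Then exc(H) ≤ (ln(e·|V(H)|)/r)·|V(H)|. -/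
open scoped Classical

noncomputable section

/-- The ball of radius `r` about `v` in `G` (within the connected component of `v`). -/
def gBall {V : Type*} (G : SimpleGraph V) (v : V) (r : ℕ) : Set V :=
  {u | G.Reachable v u ∧ G.dist v u ≤ r}

/-- `G` is bicycle-free at radius `r`: the subgraph induced on every ball of radius `r`
has excess at most `0`, i.e. at most as many edges as vertices. -/
def BicycleFree {V : Type*} (G : SimpleGraph V) (r : ℕ) : Prop :=
  ∀ v : V,
    (G.edgeSet ∩ {e : Sym2 V | ∀ x ∈ e, x ∈ gBall G v r}).ncard ≤ (gBall G v r).ncard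


section Aux

variable {V : Type*}

/-- neighbours of `x` in `S` -/
def nb (G : SimpleGraph V) (S : Finset V) (x : V) : Finset V := S.filter (fun y => G.Adj x y)

/-- twice the number of edges inside `S` -/
def tw (G : SimpleGraph V) (S : Finset V) : ℕ := ∑ x ∈ S, (nb G S x).card

/-- number of non-backtracking walks in `S` -/
def cw (G : SimpleGraph V) (S : Finset V) : ℕ → V → V → V → ℕ
  | 0, _, b, x => if x = b then 1 else 0
  | k+1, a, b, x => ∑ c ∈ (nb G S b).erase a, cw G S k b c x

theorem mem_nb {G : SimpleGraph V} {S : Finset V} {x y : V} :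
    y ∈ nb G S x ↔ y ∈ S ∧ G.Adj x y := by simp [nb]

theorem tw_eq [Fintype V] (G : SimpleGraph V) (S : Finset V) :
    tw G S = 2 * (G.edgeSet ∩ {e : Sym2 V | ∀ x ∈ e, x ∈ S}).ncard := by
  let H : SimpleGraph V :=
    { Adj := fun x y => G.Adj x y ∧ x ∈ S ∧ y ∈ S
      symm := ⟨fun x y h => ⟨h.1.symm, h.2.2, h.2.1⟩⟩
      loopless := ⟨fun x h => G.loopless.irrefl x h.1⟩ }
  have h1 : G.edgeSet ∩ {e : Sym2 V | ∀ x ∈ e, x ∈ S} = H.edgeSet := by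
    ext e
    induction e using Sym2.ind with
    | _ x y => simp [H]
  rw [h1, ← SimpleGraph.coe_edgeFinset, Set.ncard_coe_finset,
    ← SimpleGraph.sum_degrees_eq_twice_card_edges]
  have h2 : ∀ x, H.degree x = if x ∈ S then (nb G S x).card else 0 := by
    intro x
    rw [← SimpleGraph.card_neighborFinset_eq_degree]
    split_ifs with hx
    · congr 1
      ext y
      simp [mem_nb, H, hx, and_comm]
    · rw [Finset.card_eq_zero]
      ext y
      simp [H, hx]
  simp only [h2]
  rw [tw, Finset.sum_ite_mem, Finset.univ_inter]

theorem tw_insert (G : SimpleGraph V) (S : Finset V) (u : V) (hu : u ∉ S) :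
    tw G (insert u S) = tw G S + 2 * (nb G S u).card := by
  have h0 : nb G (insert u S) u = nb G S u := by
    ext y; simp only [mem_nb, Finset.mem_insert]
    constructor
    · rintro ⟨rfl | h, h2⟩
      · exact absurd h2 (G.loopless.irrefl _)
      · exact ⟨h, h2⟩
    · rintro ⟨h, h2⟩; exact ⟨Or.inr h, h2⟩
  have h1 : ∀ x ∈ S, (nb G (insert u S) x).card = (nb G S x).card + if G.Adj u x then 1 else 0 := by
    intro x hx
    unfold nb
    rw [Finset.filter_insert]
    by_cases h : G.Adj u x
    · rw [if_pos h.symm, if_pos h, Finset.card_insert_of_notMem]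
      simp [hu]
    · rw [if_neg (fun h' => h h'.symm), if_neg h]; rfl
  unfold tw
  rw [Finset.sum_insert hu, h0, Finset.sum_congr rfl h1, Finset.sum_add_distrib,
    ← Finset.card_filter]
  have : (Finset.filter (fun x => G.Adj u x) S) = nb G S u := rfl
  rw [this]; ring

theorem cw_one {G : SimpleGraph V} {S : Finset V} (h2 : ∀ x ∈ S, (nb G S x).card = 2) (x : V) :
    ∀ k a b, a ∈ S → b ∈ S → G.Adj a b → cw G S k a b x ≤ 1 := by
  intro k
  induction k with
  | zero => intro a b _ _ _; simp only [cw]; split_ifs <;> simp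
  | succ k ih =>
    intro a b ha hb hab
    simp only [cw]
    have hc : ((nb G S b).erase a).card = 1 := by
      rw [Finset.card_erase_of_mem (mem_nb.2 ⟨ha, hab.symm⟩), h2 b hb]
    calc _ ≤ ((nb G S b).erase a).card • 1 := by
          apply Finset.sum_le_card_nsmul
          intro c hc
          rw [Finset.mem_erase, mem_nb] at hc
          exact ih b c hb hc.2.1 hc.2.2
      _ = 1 := by rw [hc]; rfl

/-- a leaf cannot be passed -/
theorem cw_leaf {G : SimpleGraph V} {S : Finset V} {z y : V}
    (hz : ∀ w ∈ S, G.Adj z w → w = y) (k : ℕ) (b x : V) (hb : b ∈ S) (hbz : G.Adj b z) :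
    cw G S (k+1) b z x = 0 := by
  simp only [cw]
  apply Finset.sum_eq_zero
  intro c hc
  rw [Finset.mem_erase, mem_nb] at hc
  exact absurd ((hz c hc.2.1 hc.2.2).trans (hz b hb hbz.symm).symm) hc.1

theorem nb_erase (G : SimpleGraph V) (S : Finset V) (z b : V) :
    nb G (S.erase z) b = (nb G S b).erase z := by
  ext w; simp [mem_nb, and_assoc]

theorem sum_split {A : Finset V} {z : V} (f : V → ℕ) (h : z ∈ A → f z = 0) :
    ∑ c ∈ A, f c = ∑ c ∈ A.erase z, f c := by
  by_cases hz : z ∈ A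
  · rw [← Finset.add_sum_erase _ _ hz, h hz, zero_add]
  · rw [Finset.erase_eq_of_notMem hz]

theorem cw_strip {G : SimpleGraph V} {S : Finset V} {z y : V}
    (hz : ∀ w ∈ S, G.Adj z w → w = y) (x : V) (hx : x ≠ z) :
    ∀ k a b, b ∈ S → b ≠ z → cw G S k a b x = cw G (S.erase z) k a b x := by
  intro k
  induction k with
  | zero => intros; simp only [cw]
  | succ k ih =>
    intro a b hb hbz
    simp only [cw]
    rw [nb_erase, sum_split (z := z), Finset.erase_right_comm]
    · apply Finset.sum_congr rfl
      intro c hc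
      simp only [Finset.mem_erase, mem_nb] at hc
      exact ih b c hc.2.2.1 hc.2.1
    · intro h
      simp only [Finset.mem_erase, mem_nb] at h
      cases k with
      | zero => simp [cw, hx]
      | succ k => exact cw_leaf hz k b x hb h.2.2

theorem cw_strip_end {G : SimpleGraph V} {S : Finset V} {z y : V}
    (hz : ∀ w ∈ S, G.Adj z w → w = y) :
    ∀ k a b, b ∈ S → b ≠ z → cw G S (k+1) a b z ≤ cw G (S.erase z) k a b y := by
  intro k
  induction k with
  | zero =>
    intro a b hb hbz
    simp only [cw]
    rw [Finset.sum_ite_eq]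
    by_cases h : y = b
    · rw [if_pos h]; split_ifs <;> simp
    · rw [if_neg]
      · simp
      · intro h'
        simp only [Finset.mem_erase, mem_nb] at h'
        exact h (hz b hb h'.2.2.symm).symm
  | succ k ih =>
    intro a b hb hbz
    rw [cw, cw]
    rw [nb_erase, sum_split (z := z), Finset.erase_right_comm]
    · apply Finset.sum_le_sum
      intro c hc
      simp only [Finset.mem_erase, mem_nb] at hc
      exact ih b c hc.2.2.1 hc.2.1
    · intro h
      simp only [Finset.mem_erase, mem_nb] at h
      exact cw_leaf hz k b z hb h.2.2

theorem zw_le {G : SimpleGraph V} : ∀ (n : ℕ) (S : Finset V), S.card = n →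
    (∀ S' ⊆ S, tw G S' ≤ 2 * S'.card) →
    ∀ k b x, b ∈ S → ∑ c ∈ nb G S b, cw G S k b c x ≤ 2 := by
  intro n
  induction n with
  | zero =>
    intro S hS _ k b x hb
    rw [Finset.card_eq_zero] at hS; simp [hS] at hb
  | succ n ih =>
    intro S hS her k b x hb
    by_cases hall : ∀ x ∈ S, 2 ≤ (nb G S x).card
    · have h2 : ∀ x ∈ S, (nb G S x).card = 2 := by
        by_contra! hcon
        obtain ⟨u, hu, hne⟩ := hcon
        have hlt : ∑ x ∈ S, 2 < ∑ x ∈ S, (nb G S x).card :=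
          Finset.sum_lt_sum hall ⟨u, hu, lt_of_le_of_ne (hall u hu) hne.symm⟩
        have := her S subset_rfl
        unfold tw at this
        simp only [Finset.sum_const, smul_eq_mul] at hlt
        omega
      calc _ ≤ (nb G S b).card • 1 := by
            apply Finset.sum_le_card_nsmul
            intro c hc
            rw [mem_nb] at hc
            exact cw_one h2 x k b c hb hc.1 hc.2
        _ = 2 := by rw [h2 b hb]; rfl
    · push Not at hall
      obtain ⟨z, hzS, hzc⟩ := hall
      obtain ⟨y, hz⟩ : ∃ y, ∀ w ∈ S, G.Adj z w → w = y := by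
        have h1 : (nb G S z).card ≤ 1 := by omega
        have : Nonempty V := ⟨z⟩
        rw [Finset.card_le_one_iff_subset_singleton] at h1
        obtain ⟨y, hy⟩ := h1
        exact ⟨y, fun w hw hzw => by simpa using hy (mem_nb.2 ⟨hw, hzw⟩)⟩
      have IH := ih (S.erase z) (by rw [Finset.card_erase_of_mem hzS, hS]; rfl)
        (fun S' hS' => her S' (hS'.trans (Finset.erase_subset _ _)))
      have main : ∀ k b x, b ∈ S → b ≠ z → ∑ c ∈ nb G S b, cw G S k b c x ≤ 2 := by
        intro k b x hb hbz
        by_cases hx : x = z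
        · subst hx
          cases k with
          | zero =>
            simp only [cw]; rw [Finset.sum_ite_eq]; split_ifs <;> simp
          | succ k =>
            rw [sum_split (z := x), ← nb_erase]
            · refine le_trans (Finset.sum_le_sum ?_) (IH k b y (by simp [hb, hbz]))
              intro c hc
              simp only [Finset.mem_erase, mem_nb] at hc
              exact cw_strip_end hz k b c hc.1.2 hc.1.1
            · intro h
              rw [mem_nb] at h
              exact cw_leaf hz k b x hb h.2
        · rw [sum_split (z := z), ← nb_erase]
          · refine le_trans (Finset.sum_le_sum ?_) (IH k b x (by simp [hb, hbz]))
            intro c hc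
            simp only [Finset.mem_erase, mem_nb] at hc
            exact (cw_strip hz x hx k b c hc.1.2 hc.1.1).le
          · intro h
            rw [mem_nb] at h
            cases k with
            | zero => simp [cw, hx]
            | succ k => exact cw_leaf hz k b x hb h.2
      by_cases hbz : b = z
      · subst hbz
        by_cases hy : y ∈ nb G S b
        · have hs : nb G S b = {y} := by
            ext w
            simp only [Finset.mem_singleton]
            constructor
            · intro h; rw [mem_nb] at h; exact hz w h.1 h.2
            · rintro rfl; exact hy
          rw [hs, Finset.sum_singleton]
          rw [mem_nb] at hy
          cases k with
          | zero => simp only [cw]; split_ifs <;> simp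
          | succ k =>
            rw [cw]
            refine le_trans ?_ (main k y x hy.1 hy.2.ne')
            exact Finset.sum_le_sum_of_subset (Finset.erase_subset _ _)
        · have hs : nb G S b = ∅ := by
            ext w
            simp only [Finset.notMem_empty, iff_false]
            intro h
            have h' := mem_nb.1 h
            rw [hz w h'.1 h'.2] at h
            exact hy h
          simp [hs]
      · exact main k b x hb hbz

/-- localisation -/
theorem cw_local {G : SimpleGraph V} (hconn : G.Connected) (W : Finset V) (v : V) (r : ℕ) (x : V) :
    ∀ k a b, G.dist v b + k ≤ r →
      cw G W k a b x = cw G (W.filter (fun u => G.dist v u ≤ r)) k a b x := by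
  intro k
  induction k with
  | zero => intros; simp only [cw]
  | succ k ih =>
    intro a b h
    have hd : ∀ c, G.Adj b c → G.dist v c ≤ G.dist v b + 1 := by
      intro c hc
      have := hconn.dist_triangle (u := v) (v := b) (w := c)
      rwa [SimpleGraph.dist_eq_one_iff_adj.2 hc] at this
    have hn : nb G (W.filter (fun u => G.dist v u ≤ r)) b = nb G W b := by
      ext c
      simp only [mem_nb, Finset.mem_filter]
      constructor
      · rintro ⟨⟨h1, _⟩, h2⟩; exact ⟨h1, h2⟩
      · rintro ⟨h1, h2⟩
        have := hd c h2
        exact ⟨⟨h1, by omega⟩, h2⟩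
    simp only [cw]
    rw [hn]
    apply Finset.sum_congr rfl
    intro c hc
    simp only [Finset.mem_erase, mem_nb] at hc
    apply ih
    have := hd c hc.2.2
    omega

/-- a vertex other than the root has a parent -/
theorem exists_parent {G : SimpleGraph V} (hconn : G.Connected) (v u : V) (h : u ≠ v) :
    ∃ w, G.Adj u w ∧ G.dist v w < G.dist v u := by
  obtain ⟨p, hp⟩ := hconn.exists_walk_length_eq_dist u v
  cases p with
  | nil => exact absurd rfl h
  | cons hadj q =>
    rename_i w
    refine ⟨w, hadj, ?_⟩
    have h1 := SimpleGraph.dist_le q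
    rw [SimpleGraph.Walk.length_cons] at hp
    rw [SimpleGraph.dist_comm (u := v) (v := w), SimpleGraph.dist_comm (u := v) (v := u)]
    omega

theorem gball_sub [Fintype V] {G : SimpleGraph V} (hconn : G.Connected) {r : ℕ}
    (hbf : BicycleFree G r) (v : V) (S : Finset V) (hS : ∀ x ∈ S, G.dist v x ≤ r) :
    tw G S ≤ 2 * S.card := by
  by_contra! hcon
  let B : Finset V := Finset.univ.filter (fun u => G.dist v u ≤ r)
  have hB : ∀ u, u ∈ B ↔ G.dist v u ≤ r := by intro u; simp [B]
  have hBB : gBall G v r = (B : Set V) := by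
    ext u
    simp [gBall, hB, hconn.preconnected v u]
  have hBt : tw G B ≤ 2 * B.card := by
    have := hbf v
    rw [hBB, Set.ncard_coe_finset] at this
    rw [tw_eq]
    simpa using this
  obtain ⟨X, hX, hmax⟩ := Finset.exists_max_image
    (B.powerset.filter (fun X => 2 * X.card < tw G X)) Finset.card
    ⟨S, by
      simp only [Finset.mem_filter, Finset.mem_powerset]
      exact ⟨fun x hx => (hB x).2 (hS x hx), hcon⟩⟩
  simp only [Finset.mem_filter, Finset.mem_powerset] at hX hmax
  obtain ⟨hXB, hXt⟩ := hX
  have hXne : X.Nonempty := by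
    rw [Finset.nonempty_iff_ne_empty]
    rintro rfl
    simp [tw] at hXt
  have key : ∃ x ∈ X, ∃ y ∈ B, y ∉ X ∧ G.Adj y x := by
    by_cases hv : v ∈ X
    · have hne : (B \ X).Nonempty := by
        rw [Finset.sdiff_nonempty]
        intro hBX
        have : X = B := Finset.Subset.antisymm hXB hBX
        subst this; omega
      obtain ⟨y, hy, hmin⟩ := Finset.exists_min_image (B \ X) (G.dist v) hne
      rw [Finset.mem_sdiff] at hy
      obtain ⟨w, hw, hd⟩ := exists_parent hconn v y (by rintro rfl; exact hy.2 hv)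
      refine ⟨w, ?_, y, hy.1, hy.2, hw⟩
      by_contra hwX
      have h1 := hmin w (by
        rw [Finset.mem_sdiff, hB]; have := (hB y).1 hy.1; exact ⟨by omega, hwX⟩)
      omega
    · obtain ⟨x, hx, hmin⟩ := Finset.exists_min_image X (G.dist v) hXne
      obtain ⟨w, hw, hd⟩ := exists_parent hconn v x (by rintro rfl; exact hv hx)
      refine ⟨x, hx, w, ?_, ?_, hw.symm⟩
      · rw [hB]; have := (hB x).1 (hXB hx); omega
      · intro hwX; have := hmin w hwX; omega
  obtain ⟨x, hx, y, hyB, hyX, hyx⟩ := key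
  have hc : 1 ≤ (nb G X y).card := Finset.card_pos.2 ⟨x, mem_nb.2 ⟨hx, hyx⟩⟩
  have h1 := hmax (insert y X) ⟨Finset.insert_subset hyB hXB, by
    rw [tw_insert _ _ _ hyX, Finset.card_insert_of_notMem hyX]; omega⟩
  rw [Finset.card_insert_of_notMem hyX] at h1
  omega

/-- total number of non-backtracking walks -/
def nw [Fintype V] (G : SimpleGraph V) (S : Finset V) (k : ℕ) (a b : V) : ℕ := ∑ x, cw G S k a b x

theorem nw_zero [Fintype V] (G : SimpleGraph V) (S : Finset V) (a b : V) : nw G S 0 a b = 1 := by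
  simp [nw, cw]

theorem nw_succ [Fintype V] (G : SimpleGraph V) (S : Finset V) (k : ℕ) (a b : V) :
    nw G S (k+1) a b = ∑ c ∈ (nb G S b).erase a, nw G S k b c := by
  simp only [nw, cw]; rw [Finset.sum_comm]

theorem nw_le [Fintype V] {G : SimpleGraph V} (hconn : G.Connected) {r : ℕ}
    (hbf : BicycleFree G r) (W : Finset V) (k : ℕ) (hk : k + 1 ≤ r) (a b : V) (ha : a ∈ W)
    (hb : b ∈ W) (hab : G.Adj a b) : nw G W k a b ≤ 2 * Fintype.card V := by
  unfold nw
  have hd : G.dist a b = 1 := SimpleGraph.dist_eq_one_iff_adj.2 hab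
  calc _ ≤ (Finset.univ : Finset V).card • 2 := by
        apply Finset.sum_le_card_nsmul
        intro x _
        rw [cw_local hconn W a r x k a b (by omega)]
        refine le_trans ?_ (zw_le (G := G) _ (W.filter (fun u => G.dist a u ≤ r)) rfl ?_ k a x ?_)
        · refine Finset.single_le_sum
            (f := fun c => cw G (W.filter (fun u => G.dist a u ≤ r)) k a c x)
            (fun _ _ => Nat.zero_le _) ?_
          rw [mem_nb, Finset.mem_filter]
          exact ⟨⟨hb, by omega⟩, hab⟩
        · intro S' hS'
          apply gball_sub hconn hbf a
          intro x hx
          exact (Finset.mem_filter.1 (hS' hx)).2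
        · simp [ha]
    _ = _ := by simp [mul_comm]

theorem nw_pos [Fintype V] {G : SimpleGraph V} {W : Finset V}
    (h2 : ∀ x ∈ W, 2 ≤ (nb G W x).card) : ∀ k a b, b ∈ W → 0 < nw G W k a b := by
  intro k
  induction k with
  | zero => intros; simp [nw_zero]
  | succ k ih =>
    intro a b hb
    rw [nw_succ]
    apply Finset.sum_pos
    · intro c hc
      simp only [Finset.mem_erase, mem_nb] at hc
      exact ih b c hc.2.1
    · rw [← Finset.card_pos]
      have := Finset.pred_card_le_card_erase (s := nb G W b) (a := a)
      have := h2 b hb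
      omega

theorem log_sum_ge {ι : Type*} (s : Finset ι) (hs : s.Nonempty) (f : ι → ℝ) (hf : ∀ i ∈ s, 0 < f i) :
    (s.card : ℝ) * Real.log s.card + ∑ i ∈ s, Real.log (f i) ≤ s.card * Real.log (∑ i ∈ s, f i) := by
  have hc : (0:ℝ) < s.card := by exact_mod_cast hs.card_pos
  have hpos : 0 < ∑ i ∈ s, f i := Finset.sum_pos hf hs
  -- log (f i * card / total) ≤ f i * card / total - 1
  have h1 : ∀ i ∈ s, Real.log (f i) + Real.log s.card - Real.log (∑ i ∈ s, f i)
      ≤ f i * (s.card / ∑ i ∈ s, f i) - 1 := by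
    intro i hi
    have h := Real.log_le_sub_one_of_pos (x := f i * s.card / ∑ i ∈ s, f i)
      (div_pos (mul_pos (hf i hi) hc) hpos)
    rw [Real.log_div (mul_pos (hf i hi) hc).ne' hpos.ne', Real.log_mul (hf i hi).ne' hc.ne'] at h
    rw [mul_div_assoc] at h
    exact h
  have h2 := Finset.sum_le_sum h1
  rw [Finset.sum_sub_distrib, Finset.sum_sub_distrib, Finset.sum_add_distrib, ← Finset.sum_mul] at h2
  simp only [Finset.sum_const, nsmul_eq_mul] at h2
  rw [mul_div_cancel₀ _ hpos.ne'] at h2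
  linarith

theorem log_lower (d : ℝ) (hd : 2 ≤ d) : 2 * (d - 2) ≤ d * Real.log (d - 1) := by
  have h := Real.le_log_one_add_of_nonneg (x := d - 2) (by linarith)
  rw [show d - 2 + 2 = d by ring, show 1 + (d - 2) = d - 1 by ring, div_le_iff₀ (by linarith)] at h
  linarith

theorem step_local {V : Type*} (A : Finset V) (hA : 2 ≤ A.card) (g : V → ℝ)
    (hg : ∀ c ∈ A, 0 < g c) :
    (A.card : ℝ) * Real.log ((A.card : ℝ) - 1) + ∑ c ∈ A, Real.log (g c)
      ≤ ∑ a ∈ A, Real.log (∑ c ∈ A.erase a, g c) := by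
  have hA' : (2:ℝ) ≤ A.card := by exact_mod_cast hA
  have h1 : ∀ a ∈ A, ((A.card : ℝ) - 1) * Real.log ((A.card : ℝ) - 1) +
      (∑ c ∈ A, Real.log (g c) - Real.log (g a))
      ≤ ((A.card : ℝ) - 1) * Real.log (∑ c ∈ A.erase a, g c) := by
    intro a ha
    have hc : (A.erase a).card = A.card - 1 := Finset.card_erase_of_mem ha
    have h := log_sum_ge (A.erase a) (by rw [← Finset.card_pos]; omega) g
      (fun i hi => hg i (Finset.mem_of_mem_erase hi))
    rw [hc, Nat.cast_sub (by omega), Nat.cast_one] at h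
    rw [← Finset.add_sum_erase A (fun c => Real.log (g c)) ha]
    linarith
  have h2 := Finset.sum_le_sum h1
  rw [Finset.sum_add_distrib, Finset.sum_sub_distrib, ← Finset.mul_sum, ← Finset.mul_sum] at h2
  simp only [Finset.sum_const, nsmul_eq_mul] at h2
  have h3 : (0:ℝ) < (A.card : ℝ) - 1 := by linarith
  refine le_of_mul_le_mul_left ?_ h3
  linarith

theorem nw_step [Fintype V] {G : SimpleGraph V} {W : Finset V}
    (h2 : ∀ x ∈ W, 2 ≤ (nb G W x).card) (k : ℕ) :
    2 * ((tw G W : ℝ) - 2 * W.card) + ∑ a ∈ W, ∑ b ∈ nb G W a, Real.log (nw G W k a b)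
      ≤ ∑ a ∈ W, ∑ b ∈ nb G W a, Real.log (nw G W (k+1) a b) := by
  have hsw : ∑ a ∈ W, ∑ b ∈ nb G W a, Real.log (nw G W (k+1) a b)
      = ∑ b ∈ W, ∑ a ∈ nb G W b, Real.log (nw G W (k+1) a b) := by
    apply Finset.sum_comm'
    intro x y
    simp only [mem_nb, G.adj_comm x y]
    tauto
  rw [hsw]
  have ht : 2 * ((tw G W : ℝ) - 2 * W.card) = ∑ b ∈ W, 2 * (((nb G W b).card : ℝ) - 2) := by
    rw [← Finset.mul_sum, Finset.sum_sub_distrib, tw]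
    push_cast
    simp [mul_comm]
  rw [ht, ← Finset.sum_add_distrib]
  apply Finset.sum_le_sum
  intro b hb
  have hd : (2:ℝ) ≤ (nb G W b).card := by exact_mod_cast h2 b hb
  have h := step_local (nb G W b) (h2 b hb) (fun c => (nw G W k b c : ℝ)) (by
    intro c hc
    exact_mod_cast nw_pos h2 k b c (mem_nb.1 hc).1)
  have h' := log_lower _ hd
  simp only [nw_succ]
  push_cast
  linarith

theorem nw_total [Fintype V] {G : SimpleGraph V} {W : Finset V}
    (h2 : ∀ x ∈ W, 2 ≤ (nb G W x).card) (k : ℕ) :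
    k * (2 * ((tw G W : ℝ) - 2 * W.card))
      ≤ ∑ a ∈ W, ∑ b ∈ nb G W a, Real.log (nw G W k a b) := by
  induction k with
  | zero => simp [nw_zero]
  | succ k ih =>
    have := nw_step h2 k
    push_cast
    linarith

end Aux

/-- Excess bound for connected graphs that are bicycle-free at radius `r ≥ 10·ln |V|`. -/
theorem stmt6 {V : Type*} [Fintype V] (G : SimpleGraph V) (hconn : G.Connected)
    {r : ℕ} (hbf : BicycleFree G r)
    (hr : 10 * Real.log (Fintype.card V) ≤ (r : ℝ)) :
    (G.edgeSet.ncard : ℝ) - (Fintype.card V : ℝ)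
      ≤ (Real.log (Real.exp 1 * (Fintype.card V : ℝ)) / (r : ℝ)) * (Fintype.card V : ℝ) := by
  have hne : Nonempty V := hconn.nonempty
  have hn0 : 0 < Fintype.card V := Fintype.card_pos
  have hE : tw G Finset.univ = 2 * G.edgeSet.ncard := by
    rw [tw_eq]; simp
  generalize hL : Real.log (Fintype.card V) = L at hr
  have hn0' : (0:ℝ) < Fintype.card V := by exact_mod_cast hn0
  have hL0 : 0 ≤ L := by
    rw [← hL]; exact Real.log_nonneg (by exact_mod_cast hn0)
  rw [Real.log_mul (Real.exp_pos 1).ne' hn0'.ne', Real.log_exp, hL]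
  generalize hε : (1 + L) / (r:ℝ) = ε
  have hε0 : 0 ≤ ε := by rw [← hε]; positivity
  by_contra! hcon
  have huniv : 2 * (1 + ε) * ((Finset.univ : Finset V).card : ℝ) < tw G (Finset.univ : Finset V) := by
    rw [hE, Finset.card_univ]; push_cast; linarith
  -- the number of vertices is at least two
  have hn2 : 2 ≤ Fintype.card V := by
    by_contra! hlt
    have h1 : Fintype.card V ≤ 1 := by omega
    have : Subsingleton V := Fintype.card_le_one_iff_subsingleton.1 h1
    have h0 : tw G (Finset.univ : Finset V) = 0 := by
      unfold tw
      apply Finset.sum_eq_zero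
      intro x _
      rw [Finset.card_eq_zero, Finset.eq_empty_iff_forall_notMem]
      intro y hy
      exact (mem_nb.1 hy).2.ne (Subsingleton.elim _ _)
    rw [h0] at huniv
    have : (0:ℝ) ≤ 2 * (1 + ε) * ((Finset.univ : Finset V).card : ℝ) := by positivity
    push_cast at huniv
    linarith
  obtain ⟨W, hW, hmin⟩ := Finset.exists_min_image
    ((Finset.univ : Finset (Finset V)).filter (fun W => 2 * (1 + ε) * (W.card : ℝ) < tw G W))
    Finset.card ⟨Finset.univ, by rw [Finset.mem_filter]; exact ⟨Finset.mem_univ _, huniv⟩⟩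
  simp only [Finset.mem_filter, Finset.mem_univ, true_and] at hW hmin
  have h2 : ∀ x ∈ W, 2 ≤ (nb G W x).card := by
    intro x hx
    by_contra! hlt
    have hc : W.card = (W.erase x).card + 1 := (Finset.card_erase_add_one hx).symm
    have hnx : nb G (W.erase x) x = nb G W x := by
      rw [nb_erase, Finset.erase_eq_of_notMem]
      intro h; exact (mem_nb.1 h).2.ne rfl
    have ht := tw_insert G (W.erase x) x (by simp)
    rw [Finset.insert_erase hx, hnx] at ht
    have hle : ((nb G W x).card : ℝ) ≤ 1 := by exact_mod_cast (by omega : (nb G W x).card ≤ 1)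
    have := hmin (W.erase x) (by
      rw [hc, ht] at hW
      push_cast at hW
      linarith)
    omega
  have hlog2 := Real.log_two_gt_d9
  have hlog2' := Real.log_two_lt_d9
  have hL2 : Real.log 2 ≤ L := by
    rw [← hL]; exact Real.log_le_log (by norm_num) (by exact_mod_cast hn2)
  have hr6 : (6:ℝ) < r := by linarith
  have hr6' : 6 < r := by exact_mod_cast hr6
  have h3 := nw_total h2 (r - 1)
  have h4 : ∑ a ∈ W, ∑ b ∈ nb G W a, Real.log (nw G W (r-1) a b)
      ≤ (tw G W : ℝ) * (L + Real.log 2) := by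
    rw [tw]; push_cast; rw [Finset.sum_mul]
    apply Finset.sum_le_sum
    intro a ha
    rw [← nsmul_eq_mul]
    apply Finset.sum_le_card_nsmul
    intro b hb
    have hb' := mem_nb.1 hb
    have hle := nw_le hconn hbf W (r-1) (by omega) a b ha hb'.1 hb'.2
    have hpos := nw_pos h2 (r-1) a b hb'.1
    rw [← hL, ← Real.log_mul hn0'.ne' (by norm_num)]
    apply Real.log_le_log
    · exact_mod_cast hpos
    · rw [mul_comm]; exact_mod_cast hle
  rw [Nat.cast_sub (by omega), Nat.cast_one] at h3
  generalize (tw G W : ℝ) = T at *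
  generalize hw : (W.card : ℝ) = w at *
  have hw0 : 0 ≤ w := by rw [← hw]; positivity
  have hT : 0 < T := lt_of_le_of_lt (by positivity) hW
  have hrε : (r:ℝ) * ε = 1 + L := by rw [← hε]; field_simp
  generalize (r:ℝ) = R at *
  -- (T - 2w) (1+ε) > T ε
  have h5 : T * ε < (T - 2 * w) * (1 + ε) := by linarith
  have h6 : (R - 1) * 2 * (T * ε) < T * (L + Real.log 2) * (1 + ε) := by
    have := mul_lt_mul_of_pos_left h5 (by linarith : 0 < (R - 1) * 2)
    have h7 := mul_le_mul_of_nonneg_right (h3.trans h4) (by linarith : 0 ≤ 1 + ε)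
    linarith
  have h8 : (R - 1) * 2 * ε < (L + 1) * (1 + ε) := by
    have h9 : (R - 1) * 2 * ε < (L + Real.log 2) * (1 + ε) := by
      refine lt_of_mul_lt_mul_left ?_ hT.le
      linarith
    have := mul_le_mul_of_nonneg_right (by linarith : L + Real.log 2 ≤ L + 1) (by linarith : 0 ≤ 1 + ε)
    linarith
  have hεpos : 0 < ε := by
    by_contra! h
    have : ε = 0 := le_antisymm h hε0
    rw [this] at hrε
    linarith
  have h10 : (R - 1) * 2 < R * (1 + ε) := by
    refine lt_of_mul_lt_mul_right ?_ hεpos.le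
    have : (L + 1) = R * ε := by linarith
    rw [this] at h8
    linarith
  linarith
end
end

section
/- Let G be a d-regular graph on n vertices that is bicycle-free at radius r, let 0 < δ ≤ 1/10, and set n₀ = e^{δr−1}. Let H be a connected subgraph of G with at most two vertices of degree one and at most n₀ vertices. Then |excSet(H)| ≤ 2δ·n₀ + 2. -/
open scoped Classical

noncomputable section

/-- number of ordered adjacent pairs -/
def DD {V : Type*} (A : SimpleGraph V) (S T : Finset V) : ℝ :=
  ∑ u ∈ S, ∑ v ∈ T, (if A.Adj u v then (1:ℝ) else 0)

lemma DD_nonneg {V : Type*} (A : SimpleGraph V) (S T : Finset V) : 0 ≤ DD A S T :=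
  Finset.sum_nonneg fun _ _ => Finset.sum_nonneg fun _ _ => by split_ifs <;> norm_num

lemma DD_symm {V : Type*} (A : SimpleGraph V) (S T : Finset V) : DD A S T = DD A T S := by
  unfold DD
  rw [Finset.sum_comm]
  simp only [A.adj_comm]

lemma DD_union_left {V : Type*} (A : SimpleGraph V) {S S' : Finset V} (T : Finset V)
    (h : Disjoint S S') : DD A (S ∪ S') T = DD A S T + DD A S' T := by
  unfold DD
  rw [Finset.sum_union h]

lemma DD_union_right {V : Type*} (A : SimpleGraph V) {S S' : Finset V} (T : Finset V)
    (h : Disjoint S S') : DD A T (S ∪ S') = DD A T S + DD A T S' := by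
  rw [DD_symm, DD_union_left A T h, DD_symm A S, DD_symm A S']

lemma DD_single {V : Type*} (A : SimpleGraph V) (u : V) (T : Finset V) :
    DD A {u} T = ((T.filter (fun w => A.Adj u w)).card : ℝ) := by
  unfold DD
  simp

/-- one-step bound -/
lemma step_ineq {V : Type*} (A : SimpleGraph V) (W B B' : Finset V) (δ : ℝ) (hδ0 : 0 < δ)
    (hδ1 : δ ≤ 1/10)
    (hW : ∀ S ⊆ W, S.Nonempty → (1 + δ) * S.card < DD A S W - DD A S S / 2)
    (hB : B ⊆ W) (hBne : B.Nonempty)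
    (hB' : B' = B ∪ W.filter (fun w => ∃ u ∈ B, A.Adj u w)) :
    ∃ t : ℝ, (1 + δ) * B.card + δ * t ≤ DD A B W - DD A B B / 2 ∧
      DD A B W - DD A B B / 2 + (DD A B B / 2 - B.card) + 2 * ((B'.card : ℝ) - B.card) - t
        ≤ DD A B' W - DD A B' B' / 2 + (DD A B' B' / 2 - B'.card) ∧
      DD A B W - DD A B B / 2 ≤ DD A B' B' / 2 := by
  set S := W.filter (fun w => ∃ u ∈ B, A.Adj u w) \ B with hS
  set R := W \ (B ∪ S) with hR
  have hB'e : B' = B ∪ S := by rw [hB', hS]; simp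
  have dBS : Disjoint B S := Finset.disjoint_sdiff
  have hSW : S ⊆ W := by
    intro x hx; simp [hS] at hx; exact hx.1.1
  have hBSW : B ∪ S ⊆ W := Finset.union_subset hB hSW
  have hWe : W = (B ∪ S) ∪ R := by rw [hR, Finset.union_sdiff_of_subset hBSW]
  have dR : Disjoint (B ∪ S) R := Finset.disjoint_sdiff
  have hBR : DD A B R = 0 := by
    unfold DD
    refine Finset.sum_eq_zero fun u hu => Finset.sum_eq_zero fun w hw => ?_
    rw [if_neg]
    intro hadj
    simp only [hR, hS, Finset.mem_sdiff, Finset.mem_union, Finset.mem_filter] at hw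
    apply hw.2
    by_cases hwB : w ∈ B
    · exact Or.inl hwB
    · exact Or.inr ⟨⟨hw.1, u, hu, hadj⟩, hwB⟩
  set T := S.filter (fun u => (W.filter (fun w => A.Adj u w)).card ≤ 2) with hT
  have hTS : T ⊆ S := Finset.filter_subset _ _
  have dBT : Disjoint B T := Finset.disjoint_of_subset_right hTS dBS
  have hcard : (B'.card : ℝ) = B.card + S.card := by
    rw [hB'e, Finset.card_union_of_disjoint dBS]; push_cast; ring
  have hBW : DD A B W = DD A B B + DD A B S := by
    rw [hWe, DD_union_right A B dR, DD_union_right A B dBS, hBR]; ring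
  have hSWd : DD A S W = DD A B S + DD A S S + DD A S R := by
    rw [hWe, DD_union_right A S dR, DD_union_right A S dBS, DD_symm A S B]
  have hB'W : DD A B' W = DD A B W + DD A S W := by
    rw [hB'e, DD_union_left A W dBS]
  have hB'B' : DD A B' B' = DD A B B + 2 * DD A B S + DD A S S := by
    rw [hB'e, DD_union_left A _ dBS, DD_union_right A _ dBS, DD_union_right A _ dBS,
      DD_symm A S B]; ring
  have hdeg : ∀ u ∈ W, 2 ≤ (W.filter (fun w => A.Adj u w)).card := by
    intro u hu
    have h := hW {u} (by simpa using hu) (by simp)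
    rw [DD_single] at h
    have h2 := DD_nonneg A {u} {u}
    simp only [Finset.card_singleton, Nat.cast_one] at h
    have : (1:ℝ) < ((W.filter (fun w => A.Adj u w)).card : ℝ) := by linarith
    exact_mod_cast this
  have hdd : ∀ X : Finset V, DD A X W = ∑ u ∈ X, ((W.filter (fun w => A.Adj u w)).card : ℝ) := by
    intro X; unfold DD; simp
  have hSdeg : 3 * (S.card : ℝ) - T.card ≤ DD A S W := by
    have e1 : (3 * (S.card : ℝ) - T.card) =
        ∑ u ∈ S, (3 - (if (W.filter (fun w => A.Adj u w)).card ≤ 2 then (1:ℝ) else 0)) := by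
      rw [Finset.sum_sub_distrib, hT, Finset.card_filter]; simp; ring
    rw [e1, hdd]
    refine Finset.sum_le_sum fun u hu => ?_
    have := hdeg u (hSW hu)
    split_ifs with h
    · have : (2:ℝ) ≤ ((W.filter (fun w => A.Adj u w)).card : ℝ) := by exact_mod_cast this
      linarith
    · have : (3:ℝ) ≤ ((W.filter (fun w => A.Adj u w)).card : ℝ) := by
        exact_mod_cast (by omega : 3 ≤ (W.filter (fun w => A.Adj u w)).card)
      linarith
  have hTW : DD A T W ≤ 2 * T.card := by
    rw [hdd]
    calc _ ≤ ∑ u ∈ T, (2:ℝ) := by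
          refine Finset.sum_le_sum fun u hu => ?_
          exact_mod_cast (Finset.mem_filter.1 hu).2
      _ = _ := by simp; ring
  have hTB : (T.card : ℝ) ≤ DD A T B := by
    calc (T.card : ℝ) = ∑ u ∈ T, (1:ℝ) := by simp
      _ ≤ _ := by
        refine Finset.sum_le_sum fun u hu => ?_
        have := hTS hu
        simp only [hS, Finset.mem_sdiff, Finset.mem_filter] at this
        obtain ⟨⟨_, w, hw, hadj⟩, _⟩ := this
        have h := Finset.single_le_sum (s := B) (f := fun v => if A.Adj u v then (1:ℝ) else 0)
          (fun i _ => by positivity) hw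
        simpa [hadj.symm] using h
  have h1 := hW (B ∪ T) (Finset.union_subset hB (hTS.trans hSW)) (hBne.mono Finset.subset_union_left)
  rw [DD_union_left A _ dBT, DD_union_left A _ dBT, DD_union_right A _ dBT,
    DD_union_right A _ dBT, DD_symm A B T, Finset.card_union_of_disjoint dBT] at h1
  push_cast at h1
  have nTT := DD_nonneg A T T
  have nSS := DD_nonneg A S S
  refine ⟨T.card, ?_, ?_, ?_⟩
  · linarith
  · rw [hB'W, hcard]; linarith
  · rw [hB'B', hBW]; linarith

/-- layers -/
def lay {V : Type*} (A : SimpleGraph V) (W : Finset V) (v : V) : ℕ → Finset V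
  | 0 => {v}
  | k+1 => lay A W v k ∪ W.filter (fun w => ∃ u ∈ lay A W v k, A.Adj u w)

lemma growth {V : Type*} (A : SimpleGraph V) (W : Finset V) (v : V) (hv : v ∈ W) (r : ℕ)
    (δ : ℝ) (hδ0 : 0 < δ) (hδ1 : δ ≤ 1/10)
    (hW : ∀ S ⊆ W, S.Nonempty → (1 + δ) * S.card < DD A S W - DD A S S / 2)
    (hb : ∀ k ≤ r + 1, DD A (lay A W v k) (lay A W v k) / 2 ≤ (lay A W v k).card) :
    Real.exp (δ * r) ≤ (lay A W v (r+1)).card := by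
  set B := lay A W v with hBdef
  have hsub : ∀ k, B k ⊆ W := by
    intro k
    induction k with
    | zero => simpa [hBdef, lay] using hv
    | succ k ih => exact Finset.union_subset ih (Finset.filter_subset _ _)
  have hmono : ∀ k, B k ⊆ B (k+1) := fun k => Finset.subset_union_left
  have hne : ∀ k, (B k).Nonempty := by
    intro k
    induction k with
    | zero => exact ⟨v, by simp [hBdef, lay]⟩
    | succ k ih => exact ih.mono (hmono k)
  set q : ℝ := 1 + δ + 0.6 * δ^2 with hq
  have hq1 : 1 ≤ q := by rw [hq]; nlinarith
  have hq2 : q ≤ 2 := by rw [hq]; nlinarith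
  have hbr : 0 ≤ (1 - δ) - q * (1 - 3*δ + q*δ) := by
    have : (1 - δ) - q * (1 - 3*δ + q*δ) = δ^2 * (0.4 - 0.4 * δ - 1.2 * δ^2 - 0.36 * δ^3) := by
      rw [hq]; ring
    rw [this]
    have h2 : δ^2 ≤ 1/100 := by nlinarith
    have h3 : δ^3 ≤ 1/1000 := by
      have : δ^3 = δ^2 * δ := by ring
      nlinarith [sq_nonneg δ]
    apply mul_nonneg (sq_nonneg _); linarith
  have hexp : Real.exp δ ≤ q := by
    have := Real.exp_bound' (x := δ) hδ0.le (by linarith) (n := 3) (by norm_num)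
    simp [Finset.sum_range_succ, Nat.factorial] at this
    rw [hq]
    have h3 : δ^3 ≤ δ^2 * (1/10) := by
      have : δ^3 = δ^2 * δ := by ring
      nlinarith [sq_nonneg δ]
    nlinarith [sq_nonneg δ]
  have main : ∀ k, k + 1 ≤ r + 1 → q ^ k ≤ δ * (B (k+1)).card + (1 - 3*δ + q*δ) * (B k).card
      + δ * (DD A (B k) (B k) / 2 - (B k).card) := by
    intro k
    induction k with
    | zero =>
      intro _
      have h0 : B 0 = {v} := rfl
      have hD : DD A (B 0) (B 0) = 0 := by rw [h0, DD_single]; simp [Finset.filter_singleton]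
      have hb1 : 3 ≤ (B 1).card := by
        have h := hW {v} (by simpa using hv) (by simp)
        rw [← h0, hD, h0, DD_single] at h
        simp only [Finset.card_singleton, Nat.cast_one] at h
        have : (1:ℝ) < ((W.filter (fun w => A.Adj v w)).card : ℝ) := by linarith
        have : 1 < (W.filter (fun w => A.Adj v w)).card := by exact_mod_cast this
        have h1 : B 1 = insert v (W.filter (fun w => A.Adj v w)) := by
          show B 0 ∪ _ = _
          have h0' : lay A W v 0 = {v} := rfl
          simp only [h0, h0']
          ext; simp
        rw [h1, Finset.card_insert_of_notMem (by simp)]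
        omega
      have hb1' : (3:ℝ) ≤ (B 1).card := by exact_mod_cast hb1
      rw [hD, h0]
      simp
      nlinarith
    | succ k ih =>
      intro hk
      have ih := ih (by omega)
      obtain ⟨t, a1, a2, a3⟩ := step_ineq A W (B k) (B (k+1)) δ hδ0 hδ1 hW (hsub k) (hne k) rfl
      obtain ⟨_, _, _, c3⟩ := step_ineq A W (B (k+1)) (B (k+2)) δ hδ0 hδ1 hW (hsub _) (hne _) rfl
      have e1 := hb (k+1) (by omega)
      have e2 := hb (k+2) (by omega)
      have e0 := hb k (by omega)
      have hbk : (0:ℝ) ≤ ((B k).card : ℝ) := by positivity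
      set b0 : ℝ := ((B k).card : ℝ)
      set b1 : ℝ := ((B (k+1)).card : ℝ)
      set b2 : ℝ := ((B (k+2)).card : ℝ)
      set E0 := DD A (B k) (B k) / 2
      set E1 := DD A (B (k+1)) (B (k+1)) / 2
      set E2 := DD A (B (k+2)) (B (k+2)) / 2
      set f0 := DD A (B k) W - E0
      set f1 := DD A (B (k+1)) W - E1
      have p1 : δ * f1 ≤ δ * b2 := mul_le_mul_of_nonneg_left (by linarith) hδ0.le
      have p2 : (1-δ) * f0 ≤ (1-δ) * b1 := mul_le_mul_of_nonneg_left (by linarith) (by linarith)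
      have p3 := mul_le_mul_of_nonneg_left a2 hδ0.le
      have p4 := mul_nonneg hbr hbk
      have p5 := mul_le_mul_of_nonneg_left ih (by linarith : (0:ℝ) ≤ q)
      have p6 : 0 ≤ (q - 1) * (δ * (b0 - E0)) :=
        mul_nonneg (by linarith) (mul_nonneg hδ0.le (by linarith))
      rw [pow_succ]
      show q ^ k * q ≤ δ * b2 + (1 - 3*δ + q*δ) * b1 + δ * (E1 - b1)
      nlinarith
  have hm := main r le_rfl
  have hx := hb r (by omega)
  have hc : ((B r).card : ℝ) ≤ (B (r+1)).card := by exact_mod_cast Finset.card_le_card (hmono r)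
  have hc0 : (0:ℝ) ≤ (B (r+1)).card := by positivity
  have hy : 0 ≤ 1 - 3*δ + q*δ := by nlinarith
  have p1 := mul_le_mul_of_nonneg_left hc hy
  have p2 : 0 ≤ δ * ((B r).card - DD A (B r) (B r) / 2) := mul_nonneg hδ0.le (by linarith)
  have p3 : 0 ≤ (2 - q) * δ * (B (r+1)).card :=
    mul_nonneg (mul_nonneg (by linarith) hδ0.le) hc0
  calc Real.exp (δ * r) = Real.exp δ ^ r := by rw [mul_comm, Real.exp_nat_mul]
    _ ≤ q ^ r := pow_le_pow_left₀ (Real.exp_pos _).le hexp r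
    _ ≤ _ := by nlinarith

lemma DD_eq_edges {V : Type*} [Fintype V] (A : SimpleGraph V) (B : Finset V) :
    DD A B B / 2 = ((A.edgeSet ∩ {e : Sym2 V | ∀ x ∈ e, x ∈ B}).ncard : ℝ) := by
  let K : SimpleGraph V :=
    { Adj := fun u w => A.Adj u w ∧ u ∈ B ∧ w ∈ B
      symm := ⟨fun u w h => ⟨h.1.symm, h.2.2, h.2.1⟩⟩
      loopless := ⟨fun u h => A.loopless.irrefl u h.1⟩ }
  have hK : K.edgeSet = A.edgeSet ∩ {e : Sym2 V | ∀ x ∈ e, x ∈ B} := by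
    ext e
    induction e using Sym2.ind with
    | _ x y => simp [K]
  have h := K.sum_degrees_eq_twice_card_edges
  rw [← hK, ← SimpleGraph.coe_edgeFinset, Set.ncard_coe_finset]
  have h2 : DD A B B = ((∑ u, K.degree u : ℕ) : ℝ) := by
    unfold DD
    push_cast
    rw [← Finset.sum_subset (Finset.subset_univ B)]
    · refine Finset.sum_congr rfl fun u hu => ?_
      rw [← SimpleGraph.card_neighborFinset_eq_degree]
      simp only [Finset.sum_boole]
      congr 2
      ext w
      simp [K, hu, and_comm]
    · intro u _ hu
      rw [← SimpleGraph.card_neighborFinset_eq_degree]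
      simp only [Nat.cast_eq_zero, Finset.card_eq_zero]
      ext w
      simp [K, hu]
  rw [h2, h]; push_cast; ring

lemma bf_sub {V : Type*} [Fintype V] (G : SimpleGraph V) (r : ℕ) (hbf : BicycleFree G r)
    (A : SimpleGraph V) (hA : A ≤ G) (v : V) (B : Finset V) (hv : v ∈ B)
    (hB : ↑B ⊆ gBall G v r) : DD A B B / 2 ≤ B.card := by
  rw [DD_eq_edges]
  have hp : ∀ u : V, ∃ p, u ∈ gBall G v r → u ∉ B → G.Adj u p ∧ p ∈ gBall G v r ∧
      G.dist v p < G.dist v u := by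
    intro u
    by_cases hu : u ∈ gBall G v r ∧ u ∉ B
    · obtain ⟨w, hw⟩ := hu.1.1.symm.exists_walk_length_eq_dist
      cases w with
      | nil => exact absurd hv hu.2
      | @cons _ p _ hadj w =>
        refine ⟨p, fun _ _ => ?_⟩
        have h1 := SimpleGraph.dist_le w
        rw [SimpleGraph.Walk.length_cons] at hw
        rw [G.dist_comm] at h1 hw
        have h2 := hu.1.2
        refine ⟨hadj, ⟨w.reachable.symm, ?_⟩, ?_⟩ <;> omega
    · exact ⟨u, fun a b => absurd ⟨a, b⟩ hu⟩
  choose p hp using hp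
  have h := hbf v
  set E' := G.edgeSet ∩ {e : Sym2 V | ∀ x ∈ e, x ∈ gBall G v r}
  set X := A.edgeSet ∩ {e : Sym2 V | ∀ x ∈ e, x ∈ B}
  set Y := (fun u => s(u, p u)) '' (gBall G v r \ ↑B)
  have hXY : X ∪ Y ⊆ E' := by
    rintro e (he | ⟨u, hu, rfl⟩)
    · exact ⟨SimpleGraph.edgeSet_mono hA he.1, fun x hx => hB (he.2 x hx)⟩
    · have := hp u hu.1 hu.2
      refine ⟨this.1, ?_⟩
      intro x hx
      rcases Sym2.mem_iff.1 hx with rfl | rfl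
      · exact hu.1
      · exact this.2.1
  have hd : Disjoint X Y := by
    rw [Set.disjoint_left]
    rintro e he ⟨u, hu, rfl⟩
    exact hu.2 (he.2 u (by simp))
  have hinj : Set.InjOn (fun u => s(u, p u)) (gBall G v r \ ↑B) := by
    intro a ha b hb hab
    simp only [Sym2.eq_iff] at hab
    rcases hab with h | h
    · exact h.1
    · have h1 := (hp a ha.1 ha.2).2.2
      have h2 := (hp b hb.1 hb.2).2.2
      rw [h.2] at h1
      rw [← h.1] at h2
      omega
  have h1 := Set.ncard_le_ncard hXY (Set.toFinite _)
  rw [Set.ncard_union_eq hd (Set.toFinite _) (Set.toFinite _), Set.ncard_image_of_injOn hinj] at h1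
  have h2 := Set.ncard_sdiff_add_ncard_of_subset hB (Set.toFinite _)
  rw [Set.ncard_coe_finset] at h2
  exact_mod_cast (by omega : X.ncard ≤ B.card)

lemma lay_ball {V : Type*} (G A : SimpleGraph V) (hA : A ≤ G) (W : Finset V) (v : V) (k : ℕ) :
    ↑(lay A W v k) ⊆ gBall G v k := by
  induction k with
  | zero => intro x hx; simp [lay] at hx; subst hx; exact ⟨SimpleGraph.Reachable.refl _, by simp⟩
  | succ k ih =>
    intro x hx
    simp only [lay, Finset.coe_union, Set.mem_union, Finset.mem_coe, Finset.mem_filter] at hx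
    rcases hx with hx | ⟨_, u, hu, hadj⟩
    · have := ih hx
      exact ⟨this.1, this.2.trans (by omega)⟩
    · obtain ⟨h1, h2⟩ := ih hu
      have hadj := hA hadj
      refine ⟨h1.trans hadj.reachable, ?_⟩
      obtain ⟨w, hw⟩ := h1.exists_walk_length_eq_dist
      have := SimpleGraph.dist_le (w.concat hadj)
      rw [SimpleGraph.Walk.length_concat] at this
      omega

lemma lay_mem {V : Type*} (A : SimpleGraph V) (W : Finset V) (v : V) (k : ℕ) :
    v ∈ lay A W v k ∧ (v ∈ W → lay A W v k ⊆ W) := by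
  induction k with
  | zero => simp [lay]
  | succ k ih =>
    exact ⟨Finset.mem_union_left _ ih.1,
      fun h => Finset.union_subset (ih.2 h) (Finset.filter_subset _ _)⟩

lemma exc_bound {V : Type*} [Fintype V] (G : SimpleGraph V) (r : ℕ) (hbf : BicycleFree G r)
    (A : SimpleGraph V) (hA : A ≤ G) {δ : ℝ} (hδ0 : 0 < δ) (hδ1 : δ ≤ 1 / 10) (U : Finset V)
    (hU : (U.card : ℝ) ≤ Real.exp (δ * r - 1)) : DD A U U / 2 ≤ (1 + δ) * U.card := by
  induction U using Finset.strongInduction with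
  | H W ih =>
  by_contra hcon
  push Not at hcon
  have hW : ∀ S ⊆ W, S.Nonempty → (1 + δ) * S.card < DD A S W - DD A S S / 2 := by
    intro S hS hne
    have h1 := ih (W \ S) (Finset.sdiff_ssubset hS hne) (le_trans (by
      exact_mod_cast Finset.card_le_card Finset.sdiff_subset) hU)
    have hd : Disjoint S (W \ S) := Finset.disjoint_sdiff
    have hWe : W = S ∪ (W \ S) := by simp [hS]
    have hc : (W.card : ℝ) = S.card + (W \ S).card := by
      conv_lhs => rw [hWe, Finset.card_union_of_disjoint hd]
      push_cast; ring
    have e1 : DD A S W = DD A S S + DD A S (W \ S) := by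
      conv_lhs => rw [hWe, DD_union_right A _ hd]
    have e2 : DD A W W = DD A S S + 2 * DD A S (W \ S) + DD A (W \ S) (W \ S) := by
      conv_lhs => rw [hWe, DD_union_right A _ hd, DD_union_left A _ hd, DD_union_left A _ hd,
        DD_symm A (W \ S) S]
      ring
    rw [hc, e2] at hcon
    linarith
  have hne : W.Nonempty := by
    rw [Finset.nonempty_iff_ne_empty]
    rintro rfl
    simp [DD] at hcon
  obtain ⟨v, hv⟩ := hne
  have hr : 1 ≤ r := by
    by_contra h
    have : r = 0 := by omega
    subst this
    have h1 : (1:ℝ) ≤ W.card := by exact_mod_cast Finset.card_pos.2 ⟨v, hv⟩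
    have h2 : Real.exp (δ * (0:ℕ) - 1) < 1 := by rw [Real.exp_lt_one_iff]; simp
    linarith
  obtain ⟨m, rfl⟩ := Nat.exists_eq_add_of_le' hr
  have hg := growth A W v hv m δ hδ0 hδ1 hW (fun k hk =>
    bf_sub G (m+1) hbf A hA v _ (lay_mem A W v k).1 (fun x hx => by
      have := lay_ball G A hA W v k hx
      exact ⟨this.1, this.2.trans hk⟩))
  have h2 : ((lay A W v (m+1)).card : ℝ) ≤ W.card := by
    exact_mod_cast Finset.card_le_card ((lay_mem A W v (m+1)).2 hv)
  have h3 : Real.exp (δ * ((m+1 : ℕ):ℝ) - 1) < Real.exp (δ * m) := by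
    rw [Real.exp_lt_exp]; push_cast; linarith
  linarith

/-- Bound on the number of vertices of degree `> 2` (the excess set) in a connected
subgraph, with at most two vertices of degree one and at most `n₀ = e^(δr - 1)` vertices,
of a `d`-regular graph that is bicycle-free at radius `r`. -/
theorem stmt7 {n d r : ℕ} (G : SimpleGraph (Fin n)) (hreg : G.IsRegularOfDegree d)
    (hbf : BicycleFree G r) {δ : ℝ} (hδ0 : 0 < δ) (hδ1 : δ ≤ 1 / 10)
    (H : G.Subgraph) (hHconn : H.Connected)
    (hdeg1 : {v ∈ H.verts | (H.neighborSet v).ncard = 1}.ncard ≤ 2)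
    (hverts : (H.verts.ncard : ℝ) ≤ Real.exp (δ * r - 1)) :
    ({v ∈ H.verts | 2 < (H.neighborSet v).ncard}.ncard : ℝ)
      ≤ 2 * δ * Real.exp (δ * r - 1) + 2 := by
  set A := H.spanningCoe with hA
  set U := H.verts.toFinset with hU
  have hUc : H.verts.ncard = U.card := by rw [hU, Set.ncard_eq_toFinset_card']
  have hnb : ∀ v, (H.neighborSet v).ncard = (U.filter (fun w => A.Adj v w)).card := by
    intro v
    rw [← Set.ncard_coe_finset]
    congr 1
    ext w
    simp only [SimpleGraph.Subgraph.mem_neighborSet, Finset.coe_filter, Set.mem_setOf_eq, hU,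
      Set.mem_toFinset, hA, SimpleGraph.Subgraph.spanningCoe_adj]
    exact ⟨fun h => ⟨h.snd_mem, h⟩, fun h => h.2⟩
  have hb := exc_bound G r hbf A H.spanningCoe_le hδ0 hδ1 U (by rw [← hUc]; exact hverts)
  set N := Real.exp (δ * r - 1)
  have hN : 0 < N := Real.exp_pos _
  have hset1 : {v ∈ H.verts | (H.neighborSet v).ncard = 1}.ncard
      = (U.filter (fun v => (U.filter (fun w => A.Adj v w)).card = 1)).card := by
    rw [← Set.ncard_coe_finset]
    congr 1
    ext v
    simp [hU, hnb]
  have hset2 : {v ∈ H.verts | 2 < (H.neighborSet v).ncard}.ncard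
      = (U.filter (fun v => 2 < (U.filter (fun w => A.Adj v w)).card)).card := by
    rw [← Set.ncard_coe_finset]
    congr 1
    ext v
    simp [hU, hnb]
  rw [hset1] at hdeg1
  rw [hset2]
  by_cases hone : ∃ v ∈ U, (U.filter (fun w => A.Adj v w)).card = 0
  · obtain ⟨v, hv, h0⟩ := hone
    have hall : ∀ u ∈ U, u = v := by
      intro u hu
      by_contra hne
      have hnt : Nontrivial H.verts :=
        ⟨⟨⟨u, by simpa [hU] using hu⟩, ⟨v, by simpa [hU] using hv⟩, by simpa using hne⟩⟩
      obtain ⟨w, hw⟩ := hHconn.preconnected.coe.exists_adj_of_nontrivial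
        (⟨v, by simpa [hU] using hv⟩ : H.verts)
      rw [Finset.card_eq_zero] at h0
      have : (w : Fin n) ∈ U.filter (fun w => A.Adj v w) := by
        simp only [Finset.mem_filter, hU, Set.mem_toFinset]
        exact ⟨w.2, hw⟩
      rw [h0] at this
      simp at this
    have : U.filter (fun v => 2 < (U.filter (fun w => A.Adj v w)).card) = ∅ := by
      rw [Finset.filter_eq_empty_iff]
      intro u hu
      rw [hall u hu, h0]; omega
    rw [this]
    simp
    positivity
  · push Not at hone
    have hD : DD A U U = ∑ u ∈ U, ((U.filter (fun w => A.Adj u w)).card : ℝ) := by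
      unfold DD; simp
    have key : ((U.filter (fun v => 2 < (U.filter (fun w => A.Adj v w)).card)).card : ℝ)
        ≤ DD A U U - 2 * U.card
          + (U.filter (fun v => (U.filter (fun w => A.Adj v w)).card = 1)).card := by
      have e : DD A U U - 2 * U.card
          + (U.filter (fun v => (U.filter (fun w => A.Adj v w)).card = 1)).card
          = ∑ u ∈ U, (((U.filter (fun w => A.Adj u w)).card : ℝ) - 2
            + (if (U.filter (fun w => A.Adj u w)).card = 1 then (1:ℝ) else 0)) := by
        rw [Finset.sum_add_distrib, Finset.sum_sub_distrib, ← hD, Finset.sum_boole]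
        simp; ring
      rw [e, Finset.card_filter]
      push_cast
      refine Finset.sum_le_sum fun u hu => ?_
      have h1 := hone u hu
      generalize (U.filter (fun w => A.Adj u w)).card = k at *
      split_ifs with h2 h3 h3
      · omega
      · have : (3:ℝ) ≤ k := by exact_mod_cast h2
        linarith
      · subst h3; norm_num
      · have : (2:ℝ) ≤ k := by exact_mod_cast (by omega : 2 ≤ k)
        linarith
    have hd : ((U.filter (fun v => (U.filter (fun w => A.Adj v w)).card = 1)).card : ℝ) ≤ 2 := by
      exact_mod_cast hdeg1
    rw [hUc] at hverts
    have := mul_le_mul_of_nonneg_left hverts hδ0.le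
    nlinarith
end
end
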